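/- arXiv:1201.0713 — 5 statements merged into one kernel-verified Lean document; each statement's English description precedes it below -/
import Mathlib

section
/- For every positive integer n, the divisor sum (1*λ_odd)(n) equals 1 if n = m^2 or n = 2m^2 for some positive integer m, and equals 0 otherwise. -/
/-- The Liouville function `λ(n) = (-1)^Ω(n)`. -/
def liouville (n : ℕ) : ℤ := (-1) ^ (ArithmeticFunction.cardFactors n)

/-- `λ_odd(n) = λ(n)` for odd `n`, and `0` for even `n`. -/
def lambdaOdd (n : ℕ) : ℤ := if Odd n then liouville n else 0

/-!
The divisors of `n` prime to a prime `p` are the divisors of the `p`-free part of `n`, so the sum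
of `λ` over them is the value of `1 * λ` there. Now `1 * λ` is the characteristic function of the
squares: both functions are multiplicative, and at `p ^ k` the divisor sum is the alternating sum
`1 - 1 + 1 - ⋯` with `k + 1` terms. Finally, the `p`-free part of `n` is a square exactly when `n`
is a square or `p` times a square, according to the parity of the exponent of `p` in `n`.
-/

open scoped ArithmeticFunction.zeta

theorem isSquare_mul_iff_of_isUnit_gcd {M : Type*} [CommMonoidWithZero M] [GCDMonoid M]
    [Subsingleton Mˣ] {a b : M} (hab : IsUnit (gcd a b)) :
    IsSquare (a * b) ↔ IsSquare a ∧ IsSquare b := by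
  refine ⟨fun h ↦ ?_, fun ⟨ha, hb⟩ ↦ ha.mul hb⟩
  obtain ⟨r, hr⟩ := (isSquare_iff_exists_sq _).1 h
  have hba : IsUnit (gcd b a) := (gcd_comm' a b).isUnit hab
  exact ⟨(isSquare_iff_exists_sq a).2 (exists_eq_pow_of_mul_eq_pow hab hr),
    (isSquare_iff_exists_sq b).2 (exists_eq_pow_of_mul_eq_pow hba (mul_comm a b ▸ hr))⟩

theorem isSquare_prime_pow_iff {M : Type*} [CommMonoidWithZero M] [IsCancelMulZero M] {p : M}
    (hp : Prime p) {k : ℕ} : IsSquare (p ^ k) ↔ Even k := by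
  refine ⟨fun ⟨r, hr⟩ ↦ ?_, fun hk ↦ hk.isSquare_pow p⟩
  obtain ⟨i, -, hi⟩ := (dvd_prime_pow hp k).1 (Dvd.intro r hr.symm)
  have hassoc : Associated (p ^ k) (p ^ (i + i)) := by
    rw [hr, pow_add]
    exact hi.mul_mul hi
  exact ⟨i, le_antisymm ((pow_dvd_pow_iff hp.ne_zero hp.not_isUnit).1 hassoc.dvd)
    ((pow_dvd_pow_iff hp.ne_zero hp.not_isUnit).1 hassoc.symm.dvd)⟩

/-- The characteristic function of the positive squares, as an arithmetic function. The square `0`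
is left out because an arithmetic function vanishes at `0`. -/
def squareIndicator : ArithmeticFunction ℤ where
  toFun n := if n ≠ 0 ∧ IsSquare n then 1 else 0
  map_zero' := by simp

theorem squareIndicator_apply {n : ℕ} (hn : n ≠ 0) :
    squareIndicator n = if IsSquare n then 1 else 0 := by
  simp [squareIndicator, hn]

theorem isMultiplicative_squareIndicator : squareIndicator.IsMultiplicative := by
  refine ArithmeticFunction.IsMultiplicative.iff_ne_zero.2
    ⟨by simp [squareIndicator_apply], fun {m n} hm hn hmn ↦ ?_⟩
  rw [squareIndicator_apply hm, squareIndicator_apply hn, squareIndicator_apply (mul_ne_zero hm hn),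
    ite_zero_mul_ite_zero, mul_one]
  simp only [isSquare_mul_iff_of_isUnit_gcd (Nat.isUnit_iff.2 hmn)]

theorem liouville_prime_pow {p : ℕ} (hp : p.Prime) (k : ℕ) :
    ArithmeticFunction.liouville (p ^ k) = (-1) ^ k := by
  rw [ArithmeticFunction.liouville_apply (pow_ne_zero k hp.ne_zero),
    ArithmeticFunction.cardFactors_apply_prime_pow hp]

theorem zeta_mul_liouville : ζ * ArithmeticFunction.liouville = squareIndicator := by
  refine (ArithmeticFunction.IsMultiplicative.eq_iff_eq_on_prime_powers _
    (ArithmeticFunction.isMultiplicative_zeta.natCast.mul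
      ArithmeticFunction.isMultiplicative_liouville) _ isMultiplicative_squareIndicator).2
    fun p k hp ↦ ?_
  calc (ζ * ArithmeticFunction.liouville) (p ^ k)
      = ∑ i ∈ Finset.range (k + 1), (-1) ^ i := by
        simp only [ArithmeticFunction.coe_zeta_mul_apply, Nat.sum_divisors_prime_pow hp,
          liouville_prime_pow hp]
    _ = if Even k then 1 else 0 := by
        simp only [neg_one_geom_sum, Nat.even_add_one, ite_not]
    _ = squareIndicator (p ^ k) := by
        simp only [squareIndicator_apply (pow_ne_zero k hp.ne_zero),
          isSquare_prime_pow_iff hp.prime]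

theorem filter_not_dvd_divisors {p : ℕ} (hp : p.Prime) (n : ℕ) :
    {d ∈ n.divisors | ¬p ∣ d} = (ordCompl[p] n).divisors := by
  rcases eq_or_ne n 0 with rfl | hn
  · simp
  ext d
  simp only [Finset.mem_filter, Nat.mem_divisors]
  constructor
  · rintro ⟨⟨hdn, -⟩, hpd⟩
    exact ⟨Nat.dvd_ordCompl_of_dvd_not_dvd hdn hpd, (Nat.ordCompl_pos p hn).ne'⟩
  · rintro ⟨hd, -⟩
    exact ⟨⟨hd.trans (Nat.ordCompl_dvd n p), hn⟩,
      fun hpd ↦ Nat.not_dvd_ordCompl hp hn (hpd.trans hd)⟩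

theorem isSquare_ordCompl_iff {p : ℕ} (hp : p.Prime) {n : ℕ} (hn : 0 < n) :
    IsSquare (ordCompl[p] n) ↔ ∃ m, 0 < m ∧ (n = m ^ 2 ∨ n = p * m ^ 2) := by
  constructor
  · rintro ⟨r, hr⟩
    have hr0 : 0 < r := Nat.pos_of_mul_pos_left (hr ▸ Nat.ordCompl_pos p hn.ne')
    have hfactor : n = p ^ n.factorization p * (r * r) := by
      rw [← hr, Nat.ordProj_mul_ordCompl_eq_self]
    obtain ⟨j, hj | hj⟩ := Nat.even_or_odd' (n.factorization p) <;> rw [hj] at hfactor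
    · exact ⟨p ^ j * r, mul_pos (pow_pos hp.pos j) hr0, .inl (by rw [hfactor]; ring)⟩
    · exact ⟨p ^ j * r, mul_pos (pow_pos hp.pos j) hr0, .inr (by rw [hfactor]; ring)⟩
  · rintro ⟨m, -, rfl | rfl⟩
    · rw [sq, Nat.ordCompl_mul]
      exact IsSquare.mul_self _
    · have hself : ordCompl[p] p = 1 := by simpa using Nat.ordCompl_self_pow (k := 1) hp
      rw [Nat.ordCompl_mul, hself, one_mul, sq, Nat.ordCompl_mul]
      exact IsSquare.mul_self _

open Classical in
theorem stmt2_general {p : ℕ} (hp : p.Prime) {n : ℕ} (hn : 0 < n) :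
    ∑ d ∈ n.divisors with ¬p ∣ d, liouville d =
      if ∃ m : ℕ, 0 < m ∧ (n = m ^ 2 ∨ n = p * m ^ 2) then 1 else 0 :=
  calc ∑ d ∈ n.divisors with ¬p ∣ d, liouville d
      = ∑ d ∈ (ordCompl[p] n).divisors, ArithmeticFunction.liouville d := by
        rw [filter_not_dvd_divisors hp]
        exact Finset.sum_congr rfl fun d hd ↦
          (ArithmeticFunction.liouville_apply (Nat.pos_of_mem_divisors hd).ne').symm
    _ = squareIndicator (ordCompl[p] n) := by
        rw [← zeta_mul_liouville, ArithmeticFunction.coe_zeta_mul_apply]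
    _ = if ∃ m : ℕ, 0 < m ∧ (n = m ^ 2 ∨ n = p * m ^ 2) then 1 else 0 := by
        simp only [squareIndicator_apply (Nat.ordCompl_pos p hn.ne').ne',
          isSquare_ordCompl_iff hp hn]

open Classical in
/-- `(1 * λ_odd)(n)` is the characteristic function of numbers of the form
`m^2` or `2 m^2`. -/
theorem stmt2 (n : ℕ) (hn : 0 < n) :
    (∑ d ∈ n.divisors, lambdaOdd d) =
      if ∃ m : ℕ, 0 < m ∧ (n = m ^ 2 ∨ n = 2 * m ^ 2) then 1 else 0 := by
  simp only [← stmt2_general Nat.prime_two hn, lambdaOdd, ← Finset.sum_filter,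
    ← Nat.not_even_iff_odd, even_iff_two_dvd]
end

section
/- Let χ be a real primitive Dirichlet character modulo D with D even. Let n = abm where a ∈ A_1, b ∈ A_0, m ∈ A_{−1}, and set c = ab. Then (1*λ_odd)(n) = Σ_{c'|c} 2^{ν(a')} λ_odd(c') · (1*χ)(n/c'), where each divisor c' of c is written uniquely as c' = a'b' with a'|a and b'|b. -/
/-- Membership in the set `A_j = {u : p ∣ u prime → χ(p) = j}`. -/
def memA {D : ℕ} (χ : DirichletCharacter ℂ D) (j : ℂ) (u : ℕ) : Prop :=
  ∀ p : ℕ, p.Prime → p ∣ u → χ p = j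

/-!
Sums of completely multiplicative functions over divisors factor along `n = abm`, so the identity
can be checked one factor at a time. On divisors of `m` the functions `λ_odd` and `χ` agree; the
divisors of `b` contribute `1 * χ = 1`; and on divisors of `a`, where `1 * χ` is the
divisor-counting function `1 * 1`, the identity reads `1 * λ = (2^ν · λ) * (1 * 1)`, with `ν` being
Mathlib's `ω`. By associativity of Dirichlet convolution this follows from `λ = (2^ν · λ) * 1`,
which on a prime power `p^k` says `(-1)^k = 1 + 2 ∑ (-1)^i`, summed over `1 ≤ i ≤ k`.
-/

open Finset
open ArithmeticFunction hiding liouville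
open scoped ArithmeticFunction.omega ArithmeticFunction.zeta

theorem sum_divisors_mul_of_coprime {M : Type*} [AddCommMonoid M] {x y : ℕ} (h : x.Coprime y)
    (F : ℕ → M) :
    ∑ d ∈ (x * y).divisors, F d = ∑ d ∈ x.divisors, ∑ e ∈ y.divisors, F (d * e) := by
  rw [Nat.divisors_mul, mul_def, sum_image h.mul_injOn_divisors, sum_product]

theorem sum_divisors_mul_eq_mul_of_coprime {R F : Type*} [NonUnitalNonAssocSemiring R]
    [FunLike F ℕ R] [MulHomClass F ℕ R] {f : F} {x y : ℕ} (h : x.Coprime y) :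
    ∑ d ∈ (x * y).divisors, f d = (∑ d ∈ x.divisors, f d) * ∑ d ∈ y.divisors, f d := by
  simp only [sum_divisors_mul_of_coprime h, map_mul, sum_mul_sum]

theorem sum_divisors_mul_card_divisors_div {R : Type*} [Semiring R] (h : ArithmeticFunction R)
    (n : ℕ) :
    ∑ d ∈ n.divisors, h d * #(n / d).divisors = ∑ d ∈ n.divisors, ∑ e ∈ d.divisors, h e := by
  have card_eq (k : ℕ) : ((ζ : ArithmeticFunction R) * ζ) k = #k.divisors := by
    rw [← natCoe_mul, natCoe_apply, ← sigma_zero_apply, ← zeta_mul_pow_eq_sigma, pow_zero_eq_zeta]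
  calc ∑ d ∈ n.divisors, h d * #(n / d).divisors
      = (h * (ζ * ζ)) n := by
        simp only [mul_apply (f := h), card_eq,
          Nat.sum_divisorsAntidiagonal fun d e ↦ h d * (#e.divisors : R)]
    _ = (h * ζ * ζ) n := by rw [mul_assoc]
    _ = ∑ d ∈ n.divisors, ∑ e ∈ d.divisors, h e := by simp only [coe_mul_zeta_apply]

theorem coprime_of_forall_prime_dvd {R : Type*} {f : ℕ → R} {i j : R} {u v : ℕ} (hij : i ≠ j)
    (hu : ∀ p, p.Prime → p ∣ u → f p = i) (hv : ∀ p, p.Prime → p ∣ v → f p = j) :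
    u.Coprime v :=
  Nat.coprime_of_dvd fun p hp hpu hpv ↦ hij <| (hu p hp hpu).symm.trans (hv p hp hpv)

theorem odd_of_forall_prime_dvd {R : Type*} [Zero R] {f : ℕ → R} {j : R} {u : ℕ} (hf2 : f 2 = 0)
    (hj : j ≠ 0) (hu : ∀ p, p.Prime → p ∣ u → f p = j) : Odd u :=
  Nat.not_even_iff_odd.mp fun h ↦ hj <| (hu 2 Nat.prime_two h.two_dvd).symm.trans hf2

theorem map_eq_map_of_forall_prime_dvd {M F G : Type*} [MulOneClass M] [FunLike F ℕ M]
    [MonoidHomClass F ℕ M] [FunLike G ℕ M] [MonoidHomClass G ℕ M] {f : F} {g : G} {u : ℕ}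
    (hu : u ≠ 0) (h : ∀ p, p.Prime → p ∣ u → f p = g p) : f u = g u := by
  induction u using Nat.recOnMul with
  | zero => contradiction
  | one => rw [map_one, map_one]
  | prime p hp => exact h p hp dvd_rfl
  | mul x y ihx ihy =>
    rw [map_mul, map_mul,
      ihx (left_ne_zero_of_mul hu) fun p hp hpx ↦ h p hp (hpx.mul_right y),
      ihy (right_ne_zero_of_mul hu) fun p hp hpy ↦ h p hp (hpy.mul_left x)]

theorem sum_divisors_congr_of_forall_prime_dvd {R F G : Type*} [NonAssocSemiring R] [FunLike F ℕ R]
    [MonoidHomClass F ℕ R] [FunLike G ℕ R] [MonoidHomClass G ℕ R] {f : F} {g : G} {u : ℕ}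
    (h : ∀ p, p.Prime → p ∣ u → f p = g p) :
    ∑ d ∈ u.divisors, f d = ∑ d ∈ u.divisors, g d :=
  sum_congr rfl fun _ hd ↦ map_eq_map_of_forall_prime_dvd (Nat.pos_of_mem_divisors hd).ne'
    fun p hp hpd ↦ h p hp (hpd.trans (Nat.dvd_of_mem_divisors hd))

section NonAssocSemiring

variable {R : Type*} [NonAssocSemiring R] {f : ℕ →* R} {u : ℕ}

theorem sum_divisors_eq_card_of_forall_prime_dvd (h : ∀ p, p.Prime → p ∣ u → f p = 1) :
    ∑ d ∈ u.divisors, f d = #u.divisors := by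
  simpa using sum_divisors_congr_of_forall_prime_dvd (g := (1 : ℕ →* R)) h

theorem sum_divisors_eq_one_of_forall_prime_dvd (hu : u ≠ 0)
    (h : ∀ p, p.Prime → p ∣ u → f p = 0) : ∑ d ∈ u.divisors, f d = 1 := by
  rw [← map_one f]
  refine sum_eq_single_of_mem 1 (Nat.one_mem_divisors.mpr hu) fun d hd hd1 ↦ ?_
  obtain ⟨p, hp, k, rfl⟩ := Nat.exists_prime_and_dvd hd1
  rw [map_mul, h p hp ((dvd_mul_right p k).trans (Nat.dvd_of_mem_divisors hd)), zero_mul]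

theorem sum_divisors_mul_mul_div {a b m d e : ℕ} (hab : a.Coprime b) (ham : a.Coprime m)
    (hbm : b.Coprime m) (hb0 : b ≠ 0) (hd : d ∣ a) (he : e ∣ b)
    (ha : ∀ p, p.Prime → p ∣ a → f p = 1) (hb : ∀ p, p.Prime → p ∣ b → f p = 0) :
    ∑ x ∈ (a * b * m / (d * e)).divisors, f x =
      #(a / d).divisors * ∑ x ∈ m.divisors, f x := by
  have hda : a / d ∣ a := Nat.div_dvd_of_dvd hd
  have heb : b / e ∣ b := Nat.div_dvd_of_dvd he
  have quotient_eq : a * b * m / (d * e) = a / d * (b / e) * m := by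
    rw [Nat.div_mul_div_comm hd he, Nat.div_mul_right_comm (mul_dvd_mul hd he)]
  have sum_a : ∑ x ∈ (a / d).divisors, f x = #(a / d).divisors :=
    sum_divisors_eq_card_of_forall_prime_dvd fun p hp hpa ↦ ha p hp (hpa.trans hda)
  have sum_b : ∑ x ∈ (b / e).divisors, f x = 1 :=
    sum_divisors_eq_one_of_forall_prime_dvd (ne_zero_of_dvd_ne_zero hb0 heb)
      fun p hp hpb ↦ hb p hp (hpb.trans heb)
  rw [quotient_eq,
    sum_divisors_mul_eq_mul_of_coprime
      ((ham.coprime_dvd_left hda).mul_left (hbm.coprime_dvd_left heb)),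
    sum_divisors_mul_eq_mul_of_coprime (hab.of_dvd hda heb), sum_a, sum_b, mul_one]

end NonAssocSemiring

section CommRing

variable {R : Type*} [CommRing R] {g : ℕ →*₀ R} {a : ℕ}

theorem sum_range_two_pow_cardDistinctFactors_mul_neg_one_pow {p : ℕ} (hp : p.Prime) (k : ℕ) :
    ∑ i ∈ range (k + 1), (2 : R) ^ ω (p ^ i) * (-1) ^ i = (-1) ^ k := by
  induction k with
  | zero => simp
  | succ k ih =>
    rw [sum_range_succ, ih, cardDistinctFactors_apply_prime_pow hp k.succ_ne_zero]
    ring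

theorem sum_divisors_two_pow_cardDistinctFactors_mul
    (hg : ∀ p, p.Prime → p ∣ a → g p = -1) :
    ∑ d ∈ a.divisors, 2 ^ ω d * g d = g a := by
  induction a using Nat.recOnPosPrimePosCoprime with
  | zero => simp
  | one => simp
  | prime_pow p k hp hk =>
    have g_p : g p = -1 := hg p hp (dvd_pow_self p hk.ne')
    simp only [Nat.sum_divisors_prime_pow hp, map_pow, g_p,
      sum_range_two_pow_cardDistinctFactors_mul_neg_one_pow hp]
  | coprime x y _ _ hxy ihx ihy =>
    rw [sum_divisors_mul_of_coprime hxy, map_mul,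
      ← ihx fun p hp hpx ↦ hg p hp (hpx.mul_right y),
      ← ihy fun p hp hpy ↦ hg p hp (hpy.mul_left x), sum_mul_sum]
    refine sum_congr rfl fun d hd ↦ sum_congr rfl fun e he ↦ ?_
    have hde : d.Coprime e :=
      hxy.of_dvd (Nat.dvd_of_mem_divisors hd) (Nat.dvd_of_mem_divisors he)
    rw [cardDistinctFactors_mul hde, pow_add, map_mul, mul_mul_mul_comm]

theorem sum_divisors_two_pow_cardDistinctFactors_mul_card
    (hg : ∀ p, p.Prime → p ∣ a → g p = -1) :
    ∑ d ∈ a.divisors, 2 ^ ω d * g d * #(a / d).divisors = ∑ d ∈ a.divisors, g d := by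
  let h : ArithmeticFunction R := ⟨fun d ↦ 2 ^ ω d * g d, by simp⟩
  calc ∑ d ∈ a.divisors, 2 ^ ω d * g d * #(a / d).divisors
      = ∑ d ∈ a.divisors, ∑ e ∈ d.divisors, 2 ^ ω e * g e :=
        sum_divisors_mul_card_divisors_div h a
    _ = ∑ d ∈ a.divisors, g d := sum_congr rfl fun d hd ↦
        sum_divisors_two_pow_cardDistinctFactors_mul fun p hp hpd ↦
          hg p hp (hpd.trans (Nat.dvd_of_mem_divisors hd))

theorem sum_divisors_mul_mul_eq_sum_two_pow_mul_sum {f : ℕ →* R} {b m : ℕ} (hab : a.Coprime b)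
    (ham : a.Coprime m) (hbm : b.Coprime m) (hb0 : b ≠ 0)
    (hga : ∀ p, p.Prime → p ∣ a → g p = -1) (hfa : ∀ p, p.Prime → p ∣ a → f p = 1)
    (hfb : ∀ p, p.Prime → p ∣ b → f p = 0) (hfm : ∀ p, p.Prime → p ∣ m → f p = g p) :
    ∑ d ∈ (a * b * m).divisors, g d =
      ∑ c ∈ (a * b).divisors,
        2 ^ ω (c.gcd a) * g c * ∑ d ∈ (a * b * m / c).divisors, f d := by
  have sum_m : ∑ d ∈ m.divisors, f d = ∑ d ∈ m.divisors, g d :=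
    sum_divisors_congr_of_forall_prime_dvd hfm
  have term_eq (d : ℕ) (hd : d ∈ a.divisors) (e : ℕ) (he : e ∈ b.divisors) :
      2 ^ ω ((d * e).gcd a) * g (d * e) * ∑ x ∈ (a * b * m / (d * e)).divisors, f x =
        2 ^ ω d * g d * #(a / d).divisors * g e * ∑ x ∈ m.divisors, g x := by
    have hda : d ∣ a := Nat.dvd_of_mem_divisors hd
    have heb : e ∣ b := Nat.dvd_of_mem_divisors he
    have gcd_eq : (d * e).gcd a = d := by
      rw [(hab.symm.coprime_dvd_left heb).gcd_mul_right_cancel, Nat.gcd_eq_left hda]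
    rw [sum_divisors_mul_mul_div hab ham hbm hb0 hda heb hfa hfb, gcd_eq, map_mul, sum_m]
    ring
  symm
  calc ∑ c ∈ (a * b).divisors, 2 ^ ω (c.gcd a) * g c * ∑ d ∈ (a * b * m / c).divisors, f d
      = ∑ d ∈ a.divisors, ∑ e ∈ b.divisors,
          2 ^ ω d * g d * #(a / d).divisors * g e * ∑ x ∈ m.divisors, g x := by
        rw [sum_divisors_mul_of_coprime hab]
        exact sum_congr rfl fun d hd ↦ sum_congr rfl (term_eq d hd)
    _ = (∑ d ∈ a.divisors, 2 ^ ω d * g d * #(a / d).divisors) * (∑ d ∈ b.divisors, g d) *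
          ∑ d ∈ m.divisors, g d := by
        rw [sum_mul_sum]
        simp only [sum_mul]
    _ = (∑ d ∈ a.divisors, g d) * (∑ d ∈ b.divisors, g d) * ∑ d ∈ m.divisors, g d := by
        rw [sum_divisors_two_pow_cardDistinctFactors_mul_card hga]
    _ = ∑ d ∈ (a * b * m).divisors, g d := by
        rw [sum_divisors_mul_eq_mul_of_coprime (ham.mul_left hbm),
          sum_divisors_mul_eq_mul_of_coprime hab]

end CommRing

theorem lambdaOdd_mul (d e : ℕ) : lambdaOdd (d * e) = lambdaOdd d * lambdaOdd e := by
  simp only [lambdaOdd, liouville, Nat.odd_mul, ite_zero_mul_ite_zero]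
  refine ite_congr rfl (fun ⟨hd, he⟩ ↦ ?_) fun _ ↦ rfl
  rw [cardFactors_mul hd.pos.ne' he.pos.ne', pow_add]

theorem lambdaOdd_prime {p : ℕ} (hp : p.Prime) (hp_odd : Odd p) : lambdaOdd p = -1 := by
  rw [lambdaOdd, if_pos hp_odd, liouville, cardFactors_apply_prime hp, pow_one]

/-- The function `λ_odd` with values in a ring `R`, bundled as a completely multiplicative
function. -/
def lambdaOddHom (R : Type*) [Ring R] : ℕ →*₀ R where
  toFun n := lambdaOdd n
  map_zero' := by simp [lambdaOdd]
  map_one' := by simp [lambdaOdd, liouville]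
  map_mul' d e := by rw [lambdaOdd_mul, Int.cast_mul]

theorem lambdaOddHom_apply_prime_of_dvd (R : Type*) [Ring R] {p u : ℕ} (hp : p.Prime)
    (hu : Odd u) (hpu : p ∣ u) : lambdaOddHom R p = -1 := by
  simp [lambdaOddHom, lambdaOdd_prime hp (hu.of_dvd_nat hpu)]

theorem stmt6_general {R : Type*} [CommRing R] [NeZero (2 : R)] (f : ℕ →* R) (hf2 : f 2 = 0)
    {a b m : ℕ} (hb0 : 0 < b) (ha : ∀ p, p.Prime → p ∣ a → f p = 1)
    (hb : ∀ p, p.Prime → p ∣ b → f p = 0) (hm : ∀ p, p.Prime → p ∣ m → f p = -1) :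
    ((∑ d ∈ (a * b * m).divisors, lambdaOdd d : ℤ) : R) =
      ∑ c ∈ (a * b).divisors,
        2 ^ ω (c.gcd a) * (lambdaOdd c : R) * ∑ d ∈ (a * b * m / c).divisors, f d := by
  have : Nontrivial R := nontrivial_of_ne 2 0 two_ne_zero
  have one_ne_neg_one : (1 : R) ≠ -1 := fun h ↦
    two_ne_zero (α := R) (by rw [← one_add_one_eq_two, ← eq_neg_iff_add_eq_zero, ← h])
  have neg_one_ne_zero : (-1 : R) ≠ 0 := neg_ne_zero.mpr one_ne_zero
  have ha_odd : Odd a := odd_of_forall_prime_dvd hf2 one_ne_zero ha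
  have hm_odd : Odd m := odd_of_forall_prime_dvd hf2 neg_one_ne_zero hm
  rw [Int.cast_sum]
  exact sum_divisors_mul_mul_eq_sum_two_pow_mul_sum (g := lambdaOddHom R)
    (coprime_of_forall_prime_dvd one_ne_zero ha hb)
    (coprime_of_forall_prime_dvd one_ne_neg_one ha hm)
    (coprime_of_forall_prime_dvd neg_one_ne_zero.symm hb hm) hb0.ne'
    (fun p hp hpa ↦ lambdaOddHom_apply_prime_of_dvd R hp ha_odd hpa) ha hb
    fun p hp hpm ↦ (hm p hp hpm).trans (lambdaOddHom_apply_prime_of_dvd R hp hm_odd hpm).symm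

theorem dirichletCharacter_natCast_eq_zero_of_prime_dvd {R : Type*} [CommMonoidWithZero R]
    {D p : ℕ} (χ : DirichletCharacter R D) (hp : p.Prime) (hpD : p ∣ D) : χ (p : ZMod D) = 0 :=
  χ.map_nonunit fun h ↦ (ZMod.isUnit_prime_iff_not_dvd hp).mp h hpD

/-- For a real primitive `χ` mod an even `D`, and `n = a b m` with `a ∈ A₁`, `b ∈ A₀`,
`m ∈ A₋₁`, `c = a b`:
`(1*λ_odd)(n) = Σ_{c' ∣ c} 2^{ν(a')} λ_odd(c') (1*χ)(n/c')`, where `c' = a' b'` is the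
unique factorization with `a' ∣ a`, `b' ∣ b` (so that `a' = gcd(c', a)`). -/
theorem stmt6 (D : ℕ) (χ : DirichletCharacter ℂ D)
    (hreal : ∀ n : ℕ, (χ n).im = 0) (hprim : χ.IsPrimitive) (hDeven : 2 ∣ D)
    (a b m : ℕ) (ha0 : 0 < a) (hb0 : 0 < b) (hm0 : 0 < m)
    (ha : memA χ 1 a) (hb : memA χ 0 b) (hm : memA χ (-1) m)
    (n c : ℕ) (hn : n = a * b * m) (hc : c = a * b) :
    ((∑ d ∈ n.divisors, lambdaOdd d : ℤ) : ℂ) =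
      ∑ c' ∈ c.divisors,
        (2 : ℂ) ^ (ArithmeticFunction.cardDistinctFactors (Nat.gcd c' a)) *
          (lambdaOdd c' : ℂ) * ∑ d ∈ (n / c').divisors, χ d := by
  subst hn hc
  exact stmt6_general (χ.toMonoidHom.comp (Nat.castRingHom (ZMod D)).toMonoidHom)
    (dirichletCharacter_natCast_eq_zero_of_prime_dvd χ Nat.prime_two hDeven) hb0 ha hb hm
end

section
/- Let ρ = β + iγ be a complex number with 7/8 < β ≤ 1, and let δ be the unique real number with −π < δ ≤ π such that γ·log 2 = 2πn + δ for some integer n. If |δ| > π/100, then |(1 + 2^{−ρ})(2^{1−ρ} − 1)| > 1/25. -/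
open Complex

/-!
Put `z = 2 ^ (1 - ρ)`, so that `2 ^ (-ρ) = z / 2`. For fixed `r = ‖z‖`, the square of
`‖(1 + z / 2) * (z - 1)‖` is a product of two affine functions of `x = z.re` with slopes of opposite
sign, hence concave in `x`. The bound on `|δ|` confines `x` to `[-r, r * c]` with `c = 0.99951`,
just above `cos (π / 100)`, so only the two endpoints have to be checked.
-/

theorem concaveOn_affine_mul_affine (a c : ℝ) {b d : ℝ} (hbd : 0 ≤ b * d) :
    ConcaveOn ℝ Set.univ fun x : ℝ ↦ (a + b * x) * (c - d * x) := by
  refine ⟨convex_univ, fun x _ y _ s t hs ht hst ↦ ?_⟩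
  obtain rfl : t = 1 - s := by linarith
  simp only [smul_eq_mul]
  have gap_nonneg : 0 ≤ b * d * (s * (1 - s) * (x - y) ^ 2) := by positivity
  linear_combination gap_nonneg

theorem re_ofReal_cpow {x : ℝ} (hx : 0 < x) (w : ℂ) :
    ((x : ℂ) ^ w).re = ‖(x : ℂ) ^ w‖ * Real.cos (w.im * Real.log x) := by
  rw [norm_cpow_eq_rpow_re_of_pos hx, cpow_def_of_ne_zero (ofReal_ne_zero.mpr hx.ne'), exp_re,
    ← ofReal_log hx.le, re_ofReal_mul, im_ofReal_mul, Real.rpow_def_of_pos hx, mul_comm w.im]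

theorem cos_le_cos_of_le_abs {θ δ : ℝ} (hθ : 0 ≤ θ) (hθδ : θ ≤ |δ|) (hδ : |δ| ≤ Real.pi) :
    Real.cos δ ≤ Real.cos θ :=
  Real.cos_abs δ ▸ Real.cos_le_cos_of_nonneg_of_le_pi hθ hδ hθδ

theorem cos_pi_div_hundred_le : Real.cos (Real.pi / 100) ≤ 0.99951 := by
  have lt_pi_div : 0.0314 < Real.pi / 100 := by linarith [Real.pi_gt_d2]
  have cos_le : Real.cos (Real.pi / 100) ≤ Real.cos 0.0314 :=
    Real.cos_le_cos_of_nonneg_of_le_pi (by norm_num) (by linarith [Real.pi_pos]) lt_pi_div.le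
  have taylor := (abs_le.mp (Real.cos_bound (x := 0.0314) (by norm_num [abs_of_pos]))).2
  rw [abs_of_pos (by norm_num)] at taylor
  norm_num at cos_le taylor ⊢
  linarith

theorem two_rpow_one_sub_le {β : ℝ} (hβ : 1 / 50 ≤ β) : (2 : ℝ) ^ (1 - β) ≤ 1.973 := by
  have le_two_rpow : (1.0138 : ℝ) ≤ 2 ^ β :=
    calc (1.0138 : ℝ) ≤ Real.log 2 * β + 1 := by nlinarith [Real.log_two_gt_d9]
      _ ≤ Real.exp (Real.log 2 * β) := Real.add_one_le_exp _
      _ = 2 ^ β := (Real.rpow_def_of_pos two_pos β).symm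
  rw [Real.rpow_sub two_pos, Real.rpow_one, div_le_iff₀ (by positivity)]
  linarith

/-- The value of `‖(1 + z / 2) * (z - 1)‖ ^ 2` at a complex number `z` with `‖z‖ = r` and
`z.re = x`; these two parameters are used because the value is concave in `x` for fixed `r`. -/
noncomputable def sqNormProd (r x : ℝ) : ℝ := (1 + x + r ^ 2 / 4) * (1 - 2 * x + r ^ 2)

theorem sq_norm_eq_sqNormProd (z : ℂ) :
    ‖(1 + z / 2) * (z - 1)‖ ^ 2 = sqNormProd ‖z‖ z.re := by
  simp only [sqNormProd, norm_mul, mul_pow, Complex.sq_norm, normSq_apply, add_re, add_im, sub_re,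
    sub_im, one_re, one_im, div_ofNat_re, div_ofNat_im]
  ring

theorem concaveOn_sqNormProd (r : ℝ) : ConcaveOn ℝ Set.univ (sqNormProd r) :=
  (concaveOn_affine_mul_affine (1 + r ^ 2 / 4) (1 + r ^ 2) (b := 1) (d := 2) (by norm_num)).congr
    fun x _ ↦ by simp only [sqNormProd]; ring

theorem lt_sqNormProd_neg {r : ℝ} (hr₀ : 0 ≤ r) (hr : r ≤ 1.973) :
    (1 / 25) ^ 2 < sqNormProd r (-r) := by
  have lt_mul : 1 / 25 < (1 - r / 2) * (1 + r) := by nlinarith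
  calc (1 / 25) ^ 2 < ((1 - r / 2) * (1 + r)) ^ 2 := by gcongr
    _ = sqNormProd r (-r) := by rw [sqNormProd]; ring

theorem lt_sqNormProd_mul {r : ℝ} (hr : 0 ≤ r) :
    (1 / 25) ^ 2 < sqNormProd r (r * 0.99951) := by
  rw [sqNormProd]
  rcases le_total r (4 / 5) with h | h
  · have fst_ge : 1 ≤ 1 + r * 0.99951 + r ^ 2 / 4 := by nlinarith
    have snd_ge : (1 - r) ^ 2 ≤ 1 - 2 * (r * 0.99951) + r ^ 2 := by linarith
    calc (1 / 25) ^ 2 < 1 * (1 - r) ^ 2 := by nlinarith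
      _ ≤ _ := mul_le_mul fst_ge snd_ge (sq_nonneg _) (by linarith)
  · have fst_ge : 1.95 ≤ 1 + r * 0.99951 + r ^ 2 / 4 := by nlinarith
    have snd_ge : 1 - 0.99951 ^ 2 ≤ 1 - 2 * (r * 0.99951) + r ^ 2 := by
      linarith [sq_nonneg (r - 0.99951)]
    calc (1 / 25 : ℝ) ^ 2 < 1.95 * (1 - 0.99951 ^ 2) := by norm_num
      _ ≤ _ := mul_le_mul fst_ge snd_ge (by norm_num) (by linarith)

theorem lt_norm_one_add_div_two_mul_sub_one {z : ℂ} (hz : ‖z‖ ≤ 1.973)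
    (hre : z.re ≤ ‖z‖ * 0.99951) : 1 / 25 < ‖(1 + z / 2) * (z - 1)‖ := by
  refine lt_of_pow_lt_pow_left₀ 2 (norm_nonneg _) ?_
  have re_mem : z.re ∈ Set.Icc (-‖z‖) (‖z‖ * 0.99951) :=
    ⟨neg_le_of_abs_le (abs_re_le_norm z), hre⟩
  calc (1 / 25) ^ 2 < min (sqNormProd ‖z‖ (-‖z‖)) (sqNormProd ‖z‖ (‖z‖ * 0.99951)) :=
        lt_min (lt_sqNormProd_neg (norm_nonneg z) hz) (lt_sqNormProd_mul (norm_nonneg z))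
    _ ≤ sqNormProd ‖z‖ z.re :=
        (concaveOn_sqNormProd ‖z‖).min_le_of_mem_Icc (Set.mem_univ _) (Set.mem_univ _) re_mem
    _ = ‖(1 + z / 2) * (z - 1)‖ ^ 2 := (sq_norm_eq_sqNormProd z).symm

-- The constant `1 / 50` is nearly optimal: for `δ = π` the bound already fails at `β = 0.0195`.
theorem stmt10_general (β γ : ℝ) (ρ : ℂ) (hρ : ρ = β + γ * I) (hβ : 1 / 50 ≤ β)
    (δ : ℝ) (hδ1 : -Real.pi < δ) (hδ2 : δ ≤ Real.pi)
    (hδ3 : ∃ n : ℤ, γ * Real.log 2 = 2 * Real.pi * n + δ)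
    (hδ4 : Real.pi / 100 < |δ|) :
    1 / 25 < ‖(1 + (2 : ℂ) ^ (-ρ)) * ((2 : ℂ) ^ (1 - ρ) - 1)‖ := by
  obtain ⟨n, hn⟩ := hδ3
  have re_eq : (1 - ρ).re = 1 - β := by simp [hρ]
  have im_eq : (1 - ρ).im = -γ := by simp [hρ]
  have cpow_neg_eq : (2 : ℂ) ^ (-ρ) = 2 ^ (1 - ρ) / 2 := by
    rw [← sub_sub_cancel_left 1 ρ, cpow_sub _ _ two_ne_zero, cpow_one]
  have norm_le : ‖(2 : ℂ) ^ (1 - ρ)‖ ≤ 1.973 := by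
    rw [← ofReal_ofNat, norm_cpow_eq_rpow_re_of_pos two_pos, re_eq]
    exact two_rpow_one_sub_le hβ
  have cos_le : Real.cos δ ≤ 0.99951 :=
    (cos_le_cos_of_le_abs (by positivity) hδ4.le (abs_le.mpr ⟨hδ1.le, hδ2⟩)).trans
      cos_pi_div_hundred_le
  have cos_eq : Real.cos ((1 - ρ).im * Real.log 2) = Real.cos δ := by
    rw [im_eq, neg_mul, Real.cos_neg, hn, add_comm, mul_comm _ (n : ℝ), Real.cos_add_int_mul_two_pi]
  have re_le : ((2 : ℂ) ^ (1 - ρ)).re ≤ ‖(2 : ℂ) ^ (1 - ρ)‖ * 0.99951 := by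
    rw [← ofReal_ofNat, re_ofReal_cpow two_pos, cos_eq]
    gcongr
  rw [cpow_neg_eq]
  exact lt_norm_one_add_div_two_mul_sub_one norm_le re_le

/-- For `ρ = β + iγ` with `7/8 < β ≤ 1`, if the distance `δ` of `γ log 2` from the nearest
multiple of `2π` satisfies `|δ| > π/100`, then `|(1 + 2^{-ρ})(2^{1-ρ} - 1)| > 1/25`. -/
theorem stmt10 (β γ : ℝ) (ρ : ℂ) (hρ : ρ = β + γ * I)
    (hβ : 7 / 8 < β) (hβ1 : β ≤ 1)
    (δ : ℝ) (hδ1 : -Real.pi < δ) (hδ2 : δ ≤ Real.pi)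
    (hδ3 : ∃ n : ℤ, γ * Real.log 2 = 2 * Real.pi * n + δ)
    (hδ4 : Real.pi / 100 < |δ|) :
    1 / 25 < ‖(1 + (2 : ℂ) ^ (-ρ)) * ((2 : ℂ) ^ (1 - ρ) - 1)‖ :=
  stmt10_general β γ ρ hρ (by linarith) δ hδ1 hδ2 hδ3 hδ4
end

section
/- Let ζ denote the Riemann zeta function and suppose ρ = β + iγ is a zero of ζ with β > 7/8 and |ρ| > 10^{12}; let δ be the unique real number with −π < δ ≤ π such that γ·log 2 = 2πn + δ for some integer n, and suppose |δ| > π/100. Let χ be a real primitive Dirichlet character modulo D with D ≡ 0 (mod 4) and D > 10^9, and set U = |ρ|·D^{1/4}·log D. Then for every real y with U^6 ≤ y ≤ U^{12}, | Σ_{r ≤ y} ((−1)^r / r^ρ) Σ_{d|r} χ(d) | < (2/3) · y^{1/2−β} · |ρ| · D^{1/4} · log D · log(y/√D). -/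
open Complex

/-!
The Dirichlet series of `(-1)ⁿ` converges to `(2 ^ (1 - s) - 1) * ζ(s)` for `0 < Re s`, so at a zero
`ρ` of `ζ` its partial sums are, up to sign, its tails, of size `N ^ (-Re ρ)`. The partial sums of
`χ` satisfy the Pólya–Vinogradov bound `√D * (1 + log D)`, which partial summation carries over to
`∑ χ(n) n ^ (-ρ)`. As `χ` vanishes at even integers when `D` is even, `χ(d) (-1) ^ (d e)` equals
`χ(d) (-1) ^ e`; hence `(-1) ^ r (1 * χ)(r) / r ^ ρ` is a Dirichlet convolution of these two
sequences, and the hyperbola method bounds its sums.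
-/

section PartialSummation

open Finset

theorem norm_sum_Ioc_pow_mul_norm_sub_one_le {𝕜 : Type*} [NormedDivisionRing 𝕜] {z : 𝕜}
    (hz : ‖z‖ ≤ 1) (a b : ℕ) : ‖∑ n ∈ Ioc a b, z ^ n‖ * ‖z - 1‖ ≤ 2 := by
  rcases le_total b a with hab | hab
  · simp [Ioc_eq_empty_of_le hab]
  · rw [← Finset.Ico_add_one_add_one_eq_Ioc, ← norm_mul, geom_sum_Ico_mul z (by lia)]
    calc ‖z ^ (b + 1) - z ^ (a + 1)‖ ≤ ‖z‖ ^ (b + 1) + ‖z‖ ^ (a + 1) := by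
          simpa only [norm_pow] using norm_sub_le (z ^ (b + 1)) (z ^ (a + 1))
      _ ≤ 1 + 1 := add_le_add (pow_le_one₀ (norm_nonneg z) hz) (pow_le_one₀ (norm_nonneg z) hz)
      _ = 2 := one_add_one_eq_two

theorem norm_sum_Ioc_neg_one_pow_le (a b : ℕ) : ‖∑ n ∈ Ioc a b, (-1 : ℂ) ^ n‖ ≤ 1 := by
  have h := norm_sum_Ioc_pow_mul_norm_sub_one_le (z := (-1 : ℂ)) (by simp) a b
  norm_num at h
  linarith

theorem sum_Ioc_mul_eq_sum_mul_add {R : Type*} [Ring R] (c f : ℕ → R) {a b : ℕ} (hab : a ≤ b) :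
    ∑ n ∈ Ioc a b, c n * f n = (∑ n ∈ Ioc a b, c n) * f (b + 1) +
      ∑ n ∈ Ioc a b, (∑ m ∈ Ioc a n, c m) * (f n - f (n + 1)) := by
  induction b, hab using Nat.le_induction with
  | base => simp
  | succ b hab ih =>
    simp only [sum_Ioc_succ_top hab, ih]
    noncomm_ring

theorem norm_sum_Ioc_mul_le {R : Type*} [SeminormedRing R] {c f : ℕ → R} {g : ℕ → ℝ} {M : ℝ}
    {a : ℕ} (hc : ∀ n, ‖∑ m ∈ Ioc a n, c m‖ ≤ M) (hf : ∀ n, a < n → ‖f n‖ ≤ g n)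
    (hfg : ∀ n, a < n → ‖f n - f (n + 1)‖ ≤ g n - g (n + 1)) (b : ℕ) :
    ‖∑ n ∈ Ioc a b, c n * f n‖ ≤ M * g (a + 1) := by
  have hM : 0 ≤ M := (norm_nonneg _).trans (hc a)
  rcases le_total b a with hab | hab
  · simpa [Ioc_eq_empty_of_le hab] using
      mul_nonneg hM ((norm_nonneg _).trans (hf (a + 1) a.lt_succ_self))
  have telescope : ∑ n ∈ Ioc a b, (g n - g (n + 1)) = g (a + 1) - g (b + 1) := by
    rw [← Finset.Ico_add_one_add_one_eq_Ioc]
    simpa only [← sum_neg_distrib, neg_sub] using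
      congrArg Neg.neg (sum_Ico_sub g (Nat.add_le_add_right hab 1))
  have hsum : ‖∑ n ∈ Ioc a b, (∑ m ∈ Ioc a n, c m) * (f n - f (n + 1))‖ ≤
      ∑ n ∈ Ioc a b, M * (g n - g (n + 1)) :=
    norm_sum_le_of_le _ fun n hn ↦
      norm_mul_le_of_le (hc n) (hfg n (mem_Ioc.mp hn).1)
  calc ‖∑ n ∈ Ioc a b, c n * f n‖
      ≤ M * g (b + 1) + ∑ n ∈ Ioc a b, M * (g n - g (n + 1)) := by
        rw [sum_Ioc_mul_eq_sum_mul_add c f hab]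
        exact norm_add_le_of_le (norm_mul_le_of_le (hc b) (hf (b + 1) (by lia))) hsum
    _ = M * g (a + 1) := by rw [← mul_sum, telescope]; ring

theorem norm_cpow_neg_sub_cpow_neg_le {s : ℂ} (hs : 0 < s.re) {a b : ℝ} (ha : 0 < a)
    (hab : a ≤ b) :
    ‖(a : ℂ) ^ (-s) - (b : ℂ) ^ (-s)‖ ≤ ‖s‖ / s.re * (a ^ (-s.re) - b ^ (-s.re)) := by
  have hs0 : s ≠ 0 := by rintro rfl; simp at hs
  have hmem : (0 : ℝ) ∉ Set.uIcc a b := by simp [Set.uIcc_of_le hab, ha]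
  have integral_eq : (a : ℂ) ^ (-s) - (b : ℂ) ^ (-s) = s * ∫ u in a..b, (u : ℂ) ^ (-s - 1) := by
    rw [integral_cpow (.inr ⟨by simpa [sub_eq_iff_eq_add] using hs0, hmem⟩), sub_add_cancel]
    field_simp
    ring
  have norm_eq : ∫ u in a..b, ‖(u : ℂ) ^ (-s - 1)‖ = (a ^ (-s.re) - b ^ (-s.re)) / s.re := by
    calc ∫ u in a..b, ‖(u : ℂ) ^ (-s - 1)‖ = ∫ u in a..b, u ^ (-s.re - 1) := by
          refine intervalIntegral.integral_congr fun u hu ↦ ?_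
          rw [Set.uIcc_of_le hab] at hu
          simp [norm_cpow_eq_rpow_re_of_pos (ha.trans_le hu.1)]
      _ = (a ^ (-s.re) - b ^ (-s.re)) / s.re := by
          rw [integral_rpow (.inr ⟨by linarith, hmem⟩), sub_add_cancel]
          field_simp
          ring
  calc ‖(a : ℂ) ^ (-s) - (b : ℂ) ^ (-s)‖ ≤ ‖s‖ * ∫ u in a..b, ‖(u : ℂ) ^ (-s - 1)‖ := by
        rw [integral_eq, norm_mul]
        gcongr
        exact intervalIntegral.norm_integral_le_integral_norm hab
    _ = ‖s‖ / s.re * (a ^ (-s.re) - b ^ (-s.re)) := by rw [norm_eq]; ring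

theorem norm_sum_Ioc_mul_cpow_neg_le {c : ℕ → ℂ} {M : ℝ} {a : ℕ}
    (hc : ∀ n, ‖∑ m ∈ Ioc a n, c m‖ ≤ M) {s : ℂ} (hs : 0 < s.re) (b : ℕ) :
    ‖∑ n ∈ Ioc a b, c n * (n : ℂ) ^ (-s)‖ ≤ M * (‖s‖ / s.re * ((a : ℝ) + 1) ^ (-s.re)) := by
  have hnorm : 1 ≤ ‖s‖ / s.re := (one_le_div hs).mpr (re_le_norm s)
  have h := norm_sum_Ioc_mul_le (f := fun n ↦ (n : ℂ) ^ (-s))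
    (g := fun n ↦ ‖s‖ / s.re * (n : ℝ) ^ (-s.re)) hc (fun n hn ↦ ?_) (fun n hn ↦ ?_) b
  · exact_mod_cast h
  · rw [norm_natCast_cpow_of_pos (by lia), neg_re]
    exact le_mul_of_one_le_left (by positivity) hnorm
  · have h := norm_cpow_neg_sub_cpow_neg_le hs (a := n) (b := n + 1)
      (Nat.cast_pos.mpr (by lia)) (by linarith)
    rw [← mul_sub]
    exact_mod_cast h

end PartialSummation

section ConditionalLSeries

open Finset Filter Topology

/-- The sum of the Dirichlet series `∑ cₙ n⁻ˢ` as the limit of its partial sums. Unlike `LSeries`,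
it is meaningful under conditional convergence; its value is junk where the series diverges. -/
noncomputable def conditionalLSeries (c : ℕ → ℂ) (s : ℂ) : ℂ :=
  limUnder atTop fun N ↦ ∑ n ∈ Ioc 0 N, c n * (n : ℂ) ^ (-s)

variable {c : ℕ → ℂ} {M : ℝ} {s : ℂ}

theorem tendsto_add_one_rpow_neg_atTop {σ : ℝ} (hσ : 0 < σ) :
    Tendsto (fun N : ℕ ↦ ((N : ℝ) + 1) ^ (-σ)) atTop (𝓝 0) :=
  (tendsto_rpow_neg_atTop hσ).comp (tendsto_natCast_atTop_atTop.atTop_add tendsto_const_nhds)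

theorem sum_Ioc_zero_sub_sum_Ioc_zero {G : Type*} [AddCommGroup G] (f : ℕ → G) {a b : ℕ}
    (hab : a ≤ b) : ∑ n ∈ Ioc 0 b, f n - ∑ n ∈ Ioc 0 a, f n = ∑ n ∈ Ioc a b, f n :=
  sub_eq_of_eq_add' (sum_Ioc_consecutive f a.zero_le hab).symm

theorem tendsto_conditionalLSeries (hc : ∀ a b, ‖∑ n ∈ Ioc a b, c n‖ ≤ M) (hs : 0 < s.re) :
    Tendsto (fun N ↦ ∑ n ∈ Ioc 0 N, c n * (n : ℂ) ^ (-s)) atTop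
      (𝓝 (conditionalLSeries c s)) := by
  have hlim : Tendsto (fun N : ℕ ↦ M * (‖s‖ / s.re * ((N : ℝ) + 1) ^ (-s.re))) atTop (𝓝 0) := by
    simpa using ((tendsto_add_one_rpow_neg_atTop hs).const_mul (‖s‖ / s.re)).const_mul M
  have hcauchy : CauchySeq fun N ↦ ∑ n ∈ Ioc 0 N, c n * (n : ℂ) ^ (-s) := by
    refine cauchySeq_of_le_tendsto_0' _ (fun a b hab ↦ ?_) hlim
    rw [dist_comm, dist_eq_norm, sum_Ioc_zero_sub_sum_Ioc_zero _ hab]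
    exact norm_sum_Ioc_mul_cpow_neg_le (hc a) hs b
  exact hcauchy.tendsto_limUnder

theorem norm_conditionalLSeries_sub_le (hc : ∀ a b, ‖∑ n ∈ Ioc a b, c n‖ ≤ M) (hs : 0 < s.re)
    (N : ℕ) : ‖conditionalLSeries c s - ∑ n ∈ Ioc 0 N, c n * (n : ℂ) ^ (-s)‖ ≤
      M * (‖s‖ / s.re * ((N : ℝ) + 1) ^ (-s.re)) := by
  refine le_of_tendsto ((tendsto_conditionalLSeries hc hs).sub_const _).norm ?_
  filter_upwards [eventually_ge_atTop N] with b hb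
  rw [sum_Ioc_zero_sub_sum_Ioc_zero _ hb]
  exact norm_sum_Ioc_mul_cpow_neg_le (hc N) hs b

theorem tendstoLocallyUniformlyOn_conditionalLSeries (hc : ∀ a b, ‖∑ n ∈ Ioc a b, c n‖ ≤ M) :
    TendstoLocallyUniformlyOn (fun N s ↦ ∑ n ∈ Ioc 0 N, c n * (n : ℂ) ^ (-s))
      (conditionalLSeries c) atTop {s | 0 < s.re} := by
  have hM : 0 ≤ M := (norm_nonneg _).trans (hc 0 0)
  refine tendstoLocallyUniformlyOn_of_forall_exists_nhds fun z (hz : 0 < z.re) ↦ ?_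
  refine ⟨{s | z.re / 2 < s.re} ∩ Metric.ball z 1, ?_, ?_⟩
  · exact mem_nhdsWithin_of_mem_nhds <| inter_mem
      ((isOpen_lt continuous_const continuous_re).mem_nhds (half_lt_self hz))
      (Metric.ball_mem_nhds z one_pos)
  have bound (N : ℕ) {s : ℂ} (hs : s ∈ {s | z.re / 2 < s.re} ∩ Metric.ball z 1) :
      ‖conditionalLSeries c s - ∑ n ∈ Ioc 0 N, c n * (n : ℂ) ^ (-s)‖ ≤
        M * ((‖z‖ + 1) / (z.re / 2) * ((N : ℝ) + 1) ^ (-(z.re / 2))) := by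
    obtain ⟨hre : z.re / 2 < s.re, hball⟩ := hs
    have hnorm : ‖s‖ ≤ ‖z‖ + 1 := by
      linarith [norm_le_norm_add_norm_sub' s z, mem_ball_iff_norm.mp hball]
    refine (norm_conditionalLSeries_sub_le hc ((half_pos hz).trans hre) N).trans ?_
    gcongr
    linarith
  refine Metric.tendstoUniformlyOn_iff.mpr fun ε hε ↦ ?_
  have hzero : Tendsto (fun N : ℕ ↦ M * ((‖z‖ + 1) / (z.re / 2) * ((N : ℝ) + 1) ^ (-(z.re / 2))))
      atTop (𝓝 0) := by
    simpa using ((tendsto_add_one_rpow_neg_atTop (half_pos hz)).const_mul _).const_mul M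
  filter_upwards [hzero.eventually_lt_const hε] with N hN s hs
  rw [dist_eq_norm]
  exact (bound N hs).trans_lt hN

theorem differentiableOn_conditionalLSeries (hc : ∀ a b, ‖∑ n ∈ Ioc a b, c n‖ ≤ M) :
    DifferentiableOn ℂ (conditionalLSeries c) {s | 0 < s.re} := by
  refine (tendstoLocallyUniformlyOn_conditionalLSeries hc).differentiableOn (.of_forall fun N ↦ ?_)
    (isOpen_lt continuous_const continuous_re)
  refine DifferentiableOn.fun_sum fun n hn ↦ .const_mul ?_ _
  have hn0 : (n : ℂ) ≠ 0 := Nat.cast_ne_zero.mpr (mem_Ioc.mp hn).1.ne'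
  exact fun s _ ↦ (differentiableAt_id.neg.const_cpow (.inl hn0)).differentiableWithinAt

theorem conditionalLSeries_eq_of_lseriesHasSum {a : ℂ} (h : LSeriesHasSum c s a) (hs : s ≠ 0) :
    conditionalLSeries c s = a := by
  refine Tendsto.limUnder_eq <| (h.tendsto_sum_nat.comp (tendsto_add_atTop_nat 1)).congr fun N ↦ ?_
  simp only [Function.comp_apply, LSeries.term_of_ne_zero' hs, div_eq_mul_inv, ← cpow_neg]
  rw [range_eq_Ico, sum_eq_sum_Ico_succ_bot N.succ_pos, Nat.cast_zero,
    zero_cpow (neg_ne_zero.mpr hs), mul_zero, zero_add]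
  rfl

theorem lseriesHasSum_neg_one_pow (hs : 1 < s.re) :
    LSeriesHasSum (fun n ↦ (-1) ^ n) s ((2 ^ (1 - s) - 1) * riemannZeta s) := by
  have hs0 : s ≠ 0 := by rintro rfl; norm_num at hs
  have hone : HasSum (fun n : ℕ ↦ (n : ℂ) ^ (-s)) (riemannZeta s) := by
    refine (LSeriesHasSum_one hs).congr_fun fun n ↦ ?_
    simp [LSeries.term_of_ne_zero' hs0, cpow_neg]
  have heven : HasSum (fun n : ℕ ↦ ((-1) ^ n + 1) * (n : ℂ) ^ (-s))
      (2 ^ (1 - s) * riemannZeta s) := by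
    refine ((mul_right_injective₀ two_ne_zero).hasSum_iff fun n hn ↦ ?_).mp <|
      (hone.mul_left (2 ^ (1 - s))).congr_fun fun k ↦ ?_
    · have hodd : Odd n := Nat.not_even_iff_odd.mp fun ⟨k, hk⟩ ↦ hn ⟨k, by simp; lia⟩
      simp [hodd.neg_one_pow]
    · have h2 : (2 : ℂ) ^ (1 - s) = 2 * 2 ^ (-s) := by
        rw [sub_eq_add_neg, cpow_add _ _ two_ne_zero, cpow_one]
      have hmul := natCast_mul_natCast_cpow 2 k (-s)
      simp only [Function.comp_apply, pow_mul, neg_one_sq, one_pow, one_add_one_eq_two]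
      push_cast at hmul ⊢
      rw [hmul, h2, mul_assoc]
  rw [sub_one_mul]
  refine (heven.sub hone).congr_fun fun n ↦ ?_
  rw [LSeries.term_of_ne_zero' hs0, cpow_neg]
  ring

theorem conditionalLSeries_neg_one_pow (hs : 0 < s.re) (hs1 : s ≠ 1) :
    conditionalLSeries (fun n ↦ (-1) ^ n) s = (2 ^ (1 - s) - 1) * riemannZeta s := by
  have hopen (r : ℝ) : IsOpen {s : ℂ | r < s.re} := isOpen_lt continuous_const continuous_re
  -- The factor `s - 1` cancels the pole of `ζ`, so both sides are analytic on the half-plane.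
  have left_analytic : AnalyticOnNhd ℂ
      (fun s ↦ (s - 1) * conditionalLSeries (fun n ↦ (-1) ^ n) s) {s | 0 < s.re} :=
    ((differentiableOn_id.sub_const 1).mul
      (differentiableOn_conditionalLSeries norm_sum_Ioc_neg_one_pow_le)).analyticOnNhd (hopen 0)
  have right_analytic : AnalyticOnNhd ℂ
      (fun s ↦ (2 ^ (1 - s) - 1) * DirichletCharacter.LFunctionTrivChar₁ 1 s) {s | 0 < s.re} := by
    refine DifferentiableOn.analyticOnNhd (Differentiable.differentiableOn ?_) (hopen 0)
    have hpow : Differentiable ℂ fun s : ℂ ↦ (2 : ℂ) ^ (1 - s) := fun s ↦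
      (differentiableAt_id.const_sub 1).const_cpow (.inl two_ne_zero)
    exact (hpow.sub_const 1).mul (DirichletCharacter.differentiable_LFunctionTrivChar₁ 1)
  have trivChar_eq {s : ℂ} (hs1 : s ≠ 1) :
      DirichletCharacter.LFunctionTrivChar₁ 1 s = (s - 1) * riemannZeta s := by
    simp [DirichletCharacter.LFunctionTrivChar₁, hs1]
  have eq_of_one_lt_re : (fun s ↦ (s - 1) * conditionalLSeries (fun n ↦ (-1) ^ n) s) =ᶠ[𝓝 2]
      fun s ↦ (2 ^ (1 - s) - 1) * DirichletCharacter.LFunctionTrivChar₁ 1 s := by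
    filter_upwards [(hopen 1).mem_nhds (show (1 : ℝ) < (2 : ℂ).re by norm_num)] with s hs
    change 1 < s.re at hs
    have hs0 : s ≠ 0 := by rintro rfl; norm_num at hs
    have hs1 : s ≠ 1 := by rintro rfl; norm_num at hs
    rw [conditionalLSeries_eq_of_lseriesHasSum (lseriesHasSum_neg_one_pow hs) hs0,
      trivChar_eq hs1]
    ring
  have key : (s - 1) * conditionalLSeries (fun n ↦ (-1) ^ n) s =
      (2 ^ (1 - s) - 1) * DirichletCharacter.LFunctionTrivChar₁ 1 s :=
    left_analytic.eqOn_of_preconnected_of_eventuallyEq right_analytic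
      (convex_halfSpace_re_gt 0).isPreconnected (show (0 : ℝ) < (2 : ℂ).re by norm_num)
      eq_of_one_lt_re hs
  rw [trivChar_eq hs1] at key
  refine mul_left_cancel₀ (sub_ne_zero.mpr hs1) (key.trans ?_)
  ring

theorem norm_sum_Ioc_neg_one_pow_mul_cpow_neg_le (hs : 0 < s.re) (hzero : riemannZeta s = 0)
    (N : ℕ) : ‖∑ n ∈ Ioc 0 N, (-1) ^ n * (n : ℂ) ^ (-s)‖ ≤
      ‖s‖ / s.re * ((N : ℝ) + 1) ^ (-s.re) := by
  have hs1 : s ≠ 1 := by rintro rfl; exact riemannZeta_one_ne_zero hzero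
  have h := norm_conditionalLSeries_sub_le norm_sum_Ioc_neg_one_pow_le hs N
  rwa [conditionalLSeries_neg_one_pow hs hs1, hzero, mul_zero, zero_sub, norm_neg, one_mul] at h

end ConditionalLSeries

section PolyaVinogradov

open Finset

theorem two_mul_mul_one_sub_le_sin_pi_mul {t : ℝ} (ht0 : 0 ≤ t) (ht1 : t ≤ 1) :
    2 * (t * (1 - t)) ≤ Real.sin (Real.pi * t) := by
  have le_half {t : ℝ} (ht0 : 0 ≤ t) (ht : t ≤ 1 / 2) :
      2 * (t * (1 - t)) ≤ Real.sin (Real.pi * t) := by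
    calc 2 * (t * (1 - t)) ≤ 2 / Real.pi * (Real.pi * t) := by
          field_simp
          nlinarith
      _ ≤ Real.sin (Real.pi * t) :=
          Real.mul_le_sin (by positivity) (by nlinarith [Real.pi_pos])
  rcases le_total t (1 / 2) with ht | ht
  · exact le_half ht0 ht
  · have h := le_half (t := 1 - t) (by linarith) (by linarith)
    rw [mul_one_sub Real.pi, Real.sin_pi_sub] at h
    linarith

variable {N : ℕ} [NeZero N]

theorem four_mul_mul_one_sub_le_norm_stdAddChar_sub_one (j : ZMod N) :
    4 * (j.val / N * (1 - j.val / N)) ≤ ‖ZMod.stdAddChar j - 1‖ := by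
  have hN : (0 : ℝ) < N := Nat.cast_pos.mpr (NeZero.pos N)
  have hval : (j.val / N : ℝ) ≤ 1 := (div_le_one hN).mpr (Nat.cast_le.mpr j.val_lt.le)
  have hexp : ZMod.stdAddChar j = cexp (I * (2 * Real.pi * (j.val / N) : ℝ)) := by
    rw [ZMod.stdAddChar_apply, ZMod.toCircle_apply]
    push_cast
    ring_nf
  rw [hexp, norm_exp_I_mul_ofReal_sub_one, mul_assoc, mul_div_cancel_left₀ _ two_ne_zero, norm_mul,
    Real.norm_two]
  linarith [two_mul_mul_one_sub_le_sin_pi_mul (by positivity) hval,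
    Real.le_norm_self (Real.sin (Real.pi * (j.val / N)))]

theorem norm_sum_Ioc_stdAddChar_mul_le {j : ZMod N} (hj : j ≠ 0) (a b : ℕ) :
    ‖∑ n ∈ Ioc a b, ZMod.stdAddChar ((n : ZMod N) * j)‖ ≤
      N / 2 * ((j.val : ℝ)⁻¹ + ((-j).val : ℝ)⁻¹) := by
  have hval : (0 : ℝ) < j.val := Nat.cast_pos.mpr (ZMod.val_pos.mpr hj)
  have hval_neg : (0 : ℝ) < (-j).val := Nat.cast_pos.mpr (ZMod.val_pos.mpr (neg_ne_zero.mpr hj))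
  have hadd : (j.val : ℝ) + (-j).val = N := by
    rw [ZMod.neg_val, if_neg hj, Nat.cast_sub j.val_lt.le, add_sub_cancel]
  have hN : (0 : ℝ) < N := by linarith
  have hone_sub : (1 - j.val / N : ℝ) = (-j).val / N := by
    rw [← hadd] at hN ⊢
    field_simp
    ring
  have hgeom :
      ‖∑ n ∈ Ioc a b, ZMod.stdAddChar ((n : ZMod N) * j)‖ * ‖ZMod.stdAddChar j - 1‖ ≤ 2 := by
    simp only [← nsmul_eq_mul, AddChar.map_nsmul_eq_pow]
    exact norm_sum_Ioc_pow_mul_norm_sub_one_le (AddChar.norm_apply _ j).le a b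
  have h := (mul_le_mul_of_nonneg_left (four_mul_mul_one_sub_le_norm_stdAddChar_sub_one j)
    (norm_nonneg _)).trans hgeom
  rw [hone_sub, ← le_div_iff₀ (by positivity)] at h
  refine h.trans_eq ?_
  field_simp
  linear_combination -4 * hadd

variable (N) in
theorem sum_inv_val_le_one_add_log : ∑ j : ZMod N, (j.val : ℝ)⁻¹ ≤ 1 + Real.log N := by
  obtain ⟨m, rfl⟩ := Nat.exists_eq_succ_of_ne_zero (NeZero.ne N)
  calc ∑ j : ZMod (m + 1), (j.val : ℝ)⁻¹ = ∑ i ∈ range (m + 1), (i : ℝ)⁻¹ :=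
        Fin.sum_univ_eq_sum_range (fun i ↦ (i : ℝ)⁻¹) (m + 1)
    _ = harmonic m := by simp [sum_range_succ', harmonic]
    _ ≤ harmonic (m + 1) := by
        rw [harmonic_succ]
        exact_mod_cast le_add_of_nonneg_right (by positivity)
    _ ≤ 1 + Real.log (m + 1 : ℕ) := harmonic_le_one_add_log (m + 1)

theorem norm_gaussSum_stdAddChar {χ : DirichletCharacter ℂ N} (hχ : χ.IsPrimitive) :
    ‖gaussSum χ ZMod.stdAddChar‖ = √N := by
  have hχ' : χ⁻¹.IsPrimitive := χ.conductor_inv.trans hχ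
  have hmul : gaussSum χ⁻¹ ZMod.stdAddChar * gaussSum χ ZMod.stdAddChar = N * χ (-1) := by
    have hdft : ZMod.dft (χ : ZMod N → ℂ) =
        fun k ↦ χ⁻¹ (-k) * gaussSum χ ZMod.stdAddChar :=
      funext hχ.fourierTransform_eq_inv_mul_gaussSum
    have h := congrFun (ZMod.dft_dft (χ : ZMod N → ℂ)) 1
    rw [hdft, ZMod.dft_mul_const, ZMod.dft_comp_neg] at h
    beta_reduce at h
    rwa [hχ'.fourierTransform_eq_inv_mul_gaussSum, neg_neg, inv_inv, map_one, one_mul,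
      smul_eq_mul] at h
  have hstar : star (gaussSum χ ZMod.stdAddChar) = χ (-1) * gaussSum χ⁻¹ ZMod.stdAddChar := by
    rw [star_gaussSum_eq, AddChar.inv_mulShift, gaussSum_mulShift_of_isPrimitive _ hχ',
      inv_inv]
  have hsq : ‖gaussSum χ ZMod.stdAddChar‖ ^ 2 = N := by
    have hsign : χ (-1) * χ (-1) = 1 := by rw [← map_mul, neg_one_mul, neg_neg, map_one]
    rw [← ofReal_inj]
    push_cast
    rw [← conj_mul', ← star_def, hstar, mul_assoc, hmul, mul_left_comm, hsign, mul_one]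
  rw [← hsq, Real.sqrt_sq (norm_nonneg _)]

theorem norm_sum_Ioc_le_sqrt_mul_one_add_log {χ : DirichletCharacter ℂ N} (hχ : χ.IsPrimitive)
    (hN : 1 < N) (a b : ℕ) : ‖∑ n ∈ Ioc a b, χ n‖ ≤ √N * (1 + Real.log N) := by
  have : Fact (1 < N) := ⟨hN⟩
  have hN0 : (0 : ℝ) < N := Nat.cast_pos.mpr (NeZero.pos N)
  have hχ' : χ⁻¹.IsPrimitive := χ.conductor_inv.trans hχ
  have fourier (k : ZMod N) : χ k * gaussSum χ⁻¹ ZMod.stdAddChar =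
      ∑ j, χ⁻¹ j * ZMod.stdAddChar (k * j) := by
    have h := gaussSum_mulShift_of_isPrimitive ZMod.stdAddChar hχ' k
    rw [inv_inv] at h
    exact h.symm
  have hswap : (∑ n ∈ Ioc a b, χ n) * gaussSum χ⁻¹ ZMod.stdAddChar =
      ∑ j, χ⁻¹ j * ∑ n ∈ Ioc a b, ZMod.stdAddChar ((n : ZMod N) * j) := by
    simp only [sum_mul, fourier, mul_sum]
    exact sum_comm
  have hterm (j : ZMod N) : ‖χ⁻¹ j * ∑ n ∈ Ioc a b, ZMod.stdAddChar ((n : ZMod N) * j)‖ ≤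
      N / 2 * ((j.val : ℝ)⁻¹ + ((-j).val : ℝ)⁻¹) := by
    rcases eq_or_ne j 0 with rfl | hj
    · simp [MulChar.map_zero]
    · rw [norm_mul]
      exact (mul_le_of_le_one_left (norm_nonneg _) (χ⁻¹.norm_le_one j)).trans
        (norm_sum_Ioc_stdAddChar_mul_le hj a b)
  have hneg : ∑ j : ZMod N, ((-j).val : ℝ)⁻¹ = ∑ j : ZMod N, (j.val : ℝ)⁻¹ :=
    Equiv.sum_comp (Equiv.neg (ZMod N)) fun j ↦ (j.val : ℝ)⁻¹
  refine le_of_mul_le_mul_right ?_ (Real.sqrt_pos.mpr hN0)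
  calc ‖∑ n ∈ Ioc a b, χ n‖ * √N
      = ‖∑ j, χ⁻¹ j * ∑ n ∈ Ioc a b, ZMod.stdAddChar ((n : ZMod N) * j)‖ := by
        rw [← norm_gaussSum_stdAddChar hχ', ← norm_mul, hswap]
    _ ≤ ∑ j : ZMod N, N / 2 * ((j.val : ℝ)⁻¹ + ((-j).val : ℝ)⁻¹) :=
        norm_sum_le_of_le _ fun j _ ↦ hterm j
    _ = N * ∑ j : ZMod N, (j.val : ℝ)⁻¹ := by
        rw [← mul_sum, sum_add_distrib, hneg]
        ring
    _ ≤ N * (1 + Real.log N) := by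
        gcongr
        exact sum_inv_val_le_one_add_log N
    _ = √N * (1 + Real.log N) * √N := by
        nth_rw 1 [← Real.mul_self_sqrt hN0.le]
        ring

end PolyaVinogradov

section HyperbolaMethod

open Finset
open scoped LSeries.notation

theorem sum_Ioc_convolution {R : Type*} [Semiring R] (f g : ℕ → R) (N w : ℕ) :
    ∑ n ∈ Ioc 0 N, (f ⍟ g) n = ∑ d ∈ Ioc 0 w, f d * ∑ e ∈ Ioc 0 (N / d), g e +
      ∑ e ∈ Ioc 0 (N / (w + 1)), (∑ d ∈ Ioc w (N / e), f d) * g e := by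
  have toArithmeticFunction_apply (h : ℕ → R) {n m : ℕ} (hn : n ∈ Ioc 0 m) :
      toArithmeticFunction h n = h n := by
    simp [toArithmeticFunction, (mem_Ioc.mp hn).1.ne']
  have unsplit : ∑ n ∈ Ioc 0 N, (f ⍟ g) n =
      ∑ d ∈ Ioc 0 (max N w), f d * ∑ e ∈ Ioc 0 (N / d), g e := by
    calc ∑ n ∈ Ioc 0 N, (f ⍟ g) n = ∑ d ∈ Ioc 0 N, f d * ∑ e ∈ Ioc 0 (N / d), g e := by
          rw [LSeries.convolution, ArithmeticFunction.sum_Ioc_mul_eq_sum_sum]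
          refine sum_congr rfl fun d hd ↦ ?_
          rw [toArithmeticFunction_apply f hd]
          exact congrArg _ <| sum_congr rfl fun e he ↦ toArithmeticFunction_apply g he
      _ = ∑ d ∈ Ioc 0 (max N w), f d * ∑ e ∈ Ioc 0 (N / d), g e := by
          refine sum_subset (Ioc_subset_Ioc_right (le_max_left N w)) fun d hd hdN ↦ ?_
          have hlt : N < d := by simp only [mem_Ioc] at hd hdN; lia
          simp [Nat.div_eq_of_lt hlt]
  rw [unsplit, ← sum_Ioc_consecutive _ (Nat.zero_le w) (le_max_right N w)]
  simp only [mul_sum, sum_mul]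
  refine congrArg _ (sum_comm' fun d e ↦ ?_)
  simp only [mem_Ioc]
  constructor
  · rintro ⟨⟨hwd, -⟩, he, heN⟩
    rw [Nat.le_div_iff_mul_le (by lia)] at heN
    refine ⟨⟨hwd, ?_⟩, he, ?_⟩
    · rwa [Nat.le_div_iff_mul_le he, mul_comm]
    · rw [Nat.le_div_iff_mul_le (by lia)]
      exact (Nat.mul_le_mul_left e hwd).trans heN
  · rintro ⟨⟨hwd, hdN⟩, he, -⟩
    rw [Nat.le_div_iff_mul_le he] at hdN
    refine ⟨⟨hwd, ?_⟩, he, ?_⟩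
    · exact le_max_of_le_left ((Nat.le_mul_of_pos_right d he).trans hdN)
    · rwa [Nat.le_div_iff_mul_le (by lia), mul_comm]

theorem sum_Ioc_rpow_neg_le {σ x : ℝ} (hσ : σ ≤ 1) (hx : 1 ≤ x) :
    ∑ n ∈ Ioc 0 ⌊x⌋₊, (n : ℝ) ^ (-σ) ≤ x ^ (1 - σ) * (1 + Real.log x) := by
  have hterm : ∀ n ∈ Ioc 0 ⌊x⌋₊, (n : ℝ) ^ (-σ) ≤ x ^ (1 - σ) * (n : ℝ)⁻¹ := fun n hn ↦ by
    obtain ⟨hn0, hnx⟩ := mem_Ioc.mp hn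
    have hn0 : (0 : ℝ) < n := Nat.cast_pos.mpr hn0
    calc (n : ℝ) ^ (-σ) = (n : ℝ) ^ (1 - σ) * (n : ℝ)⁻¹ := by
          rw [← div_eq_mul_inv, ← Real.rpow_sub_one hn0.ne', sub_sub_cancel_left]
      _ ≤ x ^ (1 - σ) * (n : ℝ)⁻¹ := by
          gcongr
          exact (Nat.le_floor_iff (by linarith)).mp hnx
  have harmonic_eq : ∑ n ∈ Ioc 0 ⌊x⌋₊, (n : ℝ)⁻¹ = harmonic ⌊x⌋₊ := by
    rw [harmonic_eq_sum_Icc]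
    push_cast
    rfl
  calc ∑ n ∈ Ioc 0 ⌊x⌋₊, (n : ℝ) ^ (-σ) ≤ x ^ (1 - σ) * ∑ n ∈ Ioc 0 ⌊x⌋₊, (n : ℝ)⁻¹ := by
        rw [mul_sum]
        exact sum_le_sum hterm
    _ ≤ x ^ (1 - σ) * (1 + Real.log x) := by
        rw [harmonic_eq]
        gcongr
        exact harmonic_floor_le_one_add_log x hx

variable {R : Type*} [SeminormedRing R] {f g : ℕ → R} {σ A B : ℝ}

theorem norm_sum_Ioc_mul_sum_Ioc_div_le (hσ : 0 ≤ σ) (hf : ∀ n, 0 < n → ‖f n‖ ≤ (n : ℝ) ^ (-σ))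
    (hg : ∀ n : ℕ, ‖∑ m ∈ Ioc 0 n, g m‖ ≤ A * ((n : ℝ) + 1) ^ (-σ)) {y : ℝ} (hy : 0 < y) (w : ℕ) :
    ‖∑ d ∈ Ioc 0 w, f d * ∑ e ∈ Ioc 0 (⌊y⌋₊ / d), g e‖ ≤ w * (A * y ^ (-σ)) := by
  have hA : 0 ≤ A := by simpa using (norm_nonneg _).trans (hg 0)
  have hterm : ∀ d ∈ Ioc 0 w, ‖f d * ∑ e ∈ Ioc 0 (⌊y⌋₊ / d), g e‖ ≤ A * y ^ (-σ) := fun d hd ↦ by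
    have hd0 : 0 < d := (mem_Ioc.mp hd).1
    have hlt : y ≤ d * (((⌊y⌋₊ / d : ℕ) : ℝ) + 1) := by
      have h : ⌊y⌋₊ + 1 ≤ d * (⌊y⌋₊ / d + 1) := Nat.lt_mul_div_succ ⌊y⌋₊ hd0
      exact (Nat.lt_floor_add_one y).le.trans (by exact_mod_cast h)
    calc ‖f d * ∑ e ∈ Ioc 0 (⌊y⌋₊ / d), g e‖
        ≤ (d : ℝ) ^ (-σ) * (A * (((⌊y⌋₊ / d : ℕ) : ℝ) + 1) ^ (-σ)) :=
          norm_mul_le_of_le (hf d hd0) (hg _)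
      _ = A * (d * (((⌊y⌋₊ / d : ℕ) : ℝ) + 1)) ^ (-σ) := by
          rw [Real.mul_rpow (by positivity) (by positivity)]
          ring
      _ ≤ A * y ^ (-σ) :=
          mul_le_mul_of_nonneg_left (Real.rpow_le_rpow_of_nonpos hy hlt (by linarith)) hA
  simpa using norm_sum_le_of_le _ hterm

theorem norm_sum_Ioc_sum_Ioc_div_mul_le (hσ : σ ≤ 1) {w : ℕ}
    (hf : ∀ n, ‖∑ m ∈ Ioc w n, f m‖ ≤ B) (hg : ∀ n, 0 < n → ‖g n‖ ≤ (n : ℝ) ^ (-σ)) {x : ℝ}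
    (hx : 1 ≤ x) (N : ℕ) {E : ℕ} (hE : E ≤ x) :
    ‖∑ e ∈ Ioc 0 E, (∑ d ∈ Ioc w (N / e), f d) * g e‖ ≤ B * (x ^ (1 - σ) * (1 + Real.log x)) := by
  have hB : 0 ≤ B := (norm_nonneg _).trans (hf 0)
  calc ‖∑ e ∈ Ioc 0 E, (∑ d ∈ Ioc w (N / e), f d) * g e‖ ≤ ∑ e ∈ Ioc 0 E, B * (e : ℝ) ^ (-σ) :=
        norm_sum_le_of_le _ fun e he ↦ norm_mul_le_of_le (hf _) (hg e (mem_Ioc.mp he).1)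
    _ ≤ B * ∑ e ∈ Ioc 0 ⌊x⌋₊, (e : ℝ) ^ (-σ) := by
        rw [← mul_sum]
        gcongr
        exact Nat.le_floor hE
    _ ≤ B * (x ^ (1 - σ) * (1 + Real.log x)) := by
        gcongr
        exact sum_Ioc_rpow_neg_le hσ hx

theorem norm_sum_Ioc_convolution_le (hσ0 : 0 ≤ σ) (hσ1 : σ ≤ 1)
    (hf : ∀ n, 0 < n → ‖f n‖ ≤ (n : ℝ) ^ (-σ)) (hg : ∀ n, 0 < n → ‖g n‖ ≤ (n : ℝ) ^ (-σ))
    (hf_sum : ∀ a b, ‖∑ n ∈ Ioc a b, f n‖ ≤ B * ((a : ℝ) + 1) ^ (-σ))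
    (hg_sum : ∀ n : ℕ, ‖∑ m ∈ Ioc 0 n, g m‖ ≤ A * ((n : ℝ) + 1) ^ (-σ))
    {W x : ℝ} (hW : 0 < W) (hx : 1 ≤ x) :
    ‖∑ n ∈ Ioc 0 ⌊W * x⌋₊, (f ⍟ g) n‖ ≤
      (W * x) ^ (-σ) * (A * W + B * (x * (1 + Real.log x))) := by
  have hx0 : 0 < x := one_pos.trans_le hx
  have hA : 0 ≤ A := by simpa using (norm_nonneg _).trans (hg_sum 0)
  have hB : 0 ≤ B := by simpa using (norm_nonneg _).trans (hf_sum 0 0)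
  have hWw : W ≤ ⌊W⌋₊ + 1 := (Nat.lt_floor_add_one W).le
  have small_divisors : ‖∑ d ∈ Ioc 0 ⌊W⌋₊, f d * ∑ e ∈ Ioc 0 (⌊W * x⌋₊ / d), g e‖ ≤
      W * (A * (W * x) ^ (-σ)) := by
    refine (norm_sum_Ioc_mul_sum_Ioc_div_le hσ0 hf hg_sum (by positivity) ⌊W⌋₊).trans ?_
    gcongr
    exact Nat.floor_le hW.le
  have hE : ((⌊W * x⌋₊ / (⌊W⌋₊ + 1) : ℕ) : ℝ) ≤ x := by
    refine Nat.cast_div_le.trans <| (div_le_iff₀ (by positivity)).mpr ?_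
    calc (⌊W * x⌋₊ : ℝ) ≤ W * x := Nat.floor_le (by positivity)
      _ ≤ x * (⌊W⌋₊ + 1 : ℕ) := by
        rw [mul_comm]
        gcongr
        exact_mod_cast hWw
  have large_divisors : ‖∑ e ∈ Ioc 0 (⌊W * x⌋₊ / (⌊W⌋₊ + 1)),
      (∑ d ∈ Ioc ⌊W⌋₊ (⌊W * x⌋₊ / e), f d) * g e‖ ≤
        B * W ^ (-σ) * (x ^ (1 - σ) * (1 + Real.log x)) :=
    norm_sum_Ioc_sum_Ioc_div_mul_le hσ1 (fun n ↦ (hf_sum _ n).trans <|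
      mul_le_mul_of_nonneg_left (Real.rpow_le_rpow_of_nonpos hW hWw (by linarith)) hB) hg hx _ hE
  rw [sum_Ioc_convolution f g _ ⌊W⌋₊]
  refine (norm_add_le_of_le small_divisors large_divisors).trans_eq ?_
  rw [Real.mul_rpow hW.le hx0.le, sub_eq_neg_add, Real.rpow_add_one hx0.ne']
  ring

end HyperbolaMethod

section TwistedDivisorSum

open Finset
open scoped LSeries.notation

theorem mul_neg_one_pow_mul_of_even {R : Type*} [CommRing R] {D : ℕ} (hD : Even D)
    (χ : DirichletCharacter R D) (d e : ℕ) : χ d * (-1) ^ (d * e) = χ d * (-1) ^ e := by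
  rcases d.even_or_odd with hd | hd
  · have hχd : χ d = 0 := χ.map_nonunit fun hunit ↦
      Nat.not_coprime_of_dvd_of_dvd one_lt_two hd.two_dvd hD.two_dvd
        ((ZMod.isUnit_iff_coprime d D).mp hunit)
    rw [hχd, zero_mul, zero_mul]
  · rw [pow_mul, hd.neg_one_pow]

theorem convolution_mul_cpow_neg_of_even {D : ℕ} (hD : Even D) (χ : DirichletCharacter ℂ D) (s : ℂ)
    (n : ℕ) : ((fun d : ℕ ↦ χ d * (d : ℂ) ^ (-s)) ⍟ fun e : ℕ ↦ (-1) ^ e * (e : ℂ) ^ (-s)) n =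
      (-1) ^ n / (n : ℂ) ^ s * ∑ d ∈ n.divisors, χ d := by
  rw [LSeries.convolution_def, ← Nat.sum_divisorsAntidiagonal (fun d _ ↦ χ d), mul_sum]
  refine sum_congr rfl fun p hp ↦ ?_
  have hcpow := natCast_mul_natCast_cpow p.1 p.2 (-s)
  rw [← Nat.cast_mul] at hcpow
  rw [← (Nat.mem_divisorsAntidiagonal.mp hp).1, div_eq_mul_inv, ← cpow_neg, hcpow]
  linear_combination -((p.1 : ℂ) ^ (-s) * (p.2 : ℂ) ^ (-s)) *
    mul_neg_one_pow_mul_of_even hD χ p.1 p.2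

variable {ρ : ℂ} {D : ℕ} {χ : DirichletCharacter ℂ D}

theorem norm_sum_neg_one_pow_div_cpow_mul_sum_divisors_le (hzero : riemannZeta ρ = 0)
    (hρ : 0 < ρ.re) (hD : Even D) (hD0 : D ≠ 0) (hχ : χ.IsPrimitive) {W x : ℝ} (hW : 0 < W)
    (hx : 1 ≤ x) :
    ‖∑ r ∈ Icc 1 ⌊W * x⌋₊, ((-1) ^ r / (r : ℂ) ^ ρ) * ∑ d ∈ r.divisors, χ d‖ ≤
      (W * x) ^ (-ρ.re) * (‖ρ‖ / ρ.re * W +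
        √D * (1 + Real.log D) * (‖ρ‖ / ρ.re) * (x * (1 + Real.log x))) := by
  have hσ : ρ.re < 1 := by
    by_contra! h
    exact riemannZeta_ne_zero_of_one_le_re h hzero
  have : NeZero D := ⟨hD0⟩
  have hD1 : 1 < D := by have := hD.two_dvd; lia
  have norm_mul_cpow_le {z : ℂ} (hz : ‖z‖ ≤ 1) {n : ℕ} (hn : 0 < n) :
      ‖z * (n : ℂ) ^ (-ρ)‖ ≤ (n : ℝ) ^ (-ρ.re) := by
    rw [norm_mul, norm_natCast_cpow_of_pos hn, neg_re]
    exact mul_le_of_le_one_left (by positivity) hz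
  simp only [← convolution_mul_cpow_neg_of_even hD χ ρ]
  refine norm_sum_Ioc_convolution_le hρ.le hσ.le
    (fun n ↦ norm_mul_cpow_le (χ.norm_le_one n)) (fun n ↦ norm_mul_cpow_le (by simp))
    (fun a b ↦ ?_) (norm_sum_Ioc_neg_one_pow_mul_cpow_neg_le hρ hzero) hW hx
  rw [mul_assoc]
  exact norm_sum_Ioc_mul_cpow_neg_le (norm_sum_Ioc_le_sqrt_mul_one_add_log hχ hD1 a) hρ b

theorem norm_sum_neg_one_pow_div_cpow_mul_sum_divisors_le_of_sqrt_le (hzero : riemannZeta ρ = 0)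
    (hρ : 0 < ρ.re) (hD : Even D) (hD0 : D ≠ 0) (hχ : χ.IsPrimitive) {y : ℝ} (hy : √D ≤ y) :
    ‖∑ r ∈ Icc 1 ⌊y⌋₊, ((-1) ^ r / (r : ℂ) ^ ρ) * ∑ d ∈ r.divisors, χ d‖ ≤
      y ^ (1 / 2 - ρ.re) * ‖ρ‖ * (D : ℝ) ^ ((1 : ℝ) / 4) *
        (1 / ρ.re * (1 + (1 + Real.log D) * (1 + Real.log (y / √D) / 2))) := by
  have hD_pos : (0 : ℝ) < D := Nat.cast_pos.mpr hD0.bot_lt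
  have hy0 : 0 < y := (Real.sqrt_pos.mpr hD_pos).trans_le hy
  set q := (D : ℝ) ^ ((1 : ℝ) / 4) with hq
  have hq0 : 0 < q := by positivity
  have hqq : √D = q * q := by
    rw [hq, ← Real.rpow_add hD_pos, Real.sqrt_eq_rpow]
    norm_num
  have hx_eq : √y / q = √(y / √D) := by
    rw [Real.sqrt_div hy0.le, hqq, Real.sqrt_mul_self hq0.le]
  have hx : 1 ≤ √y / q := by
    rwa [hx_eq, Real.one_le_sqrt, one_le_div (Real.sqrt_pos.mpr hD_pos)]
  have hlog : Real.log (√y / q) = Real.log (y / √D) / 2 := by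
    rw [hx_eq, Real.log_sqrt (by positivity)]
  have hWx : √y * q * (√y / q) = y := by
    field_simp
    exact Real.sq_sqrt hy0.le
  have hpow : y ^ (1 / 2 - ρ.re) = √y * y ^ (-ρ.re) := by
    rw [Real.sqrt_eq_rpow, ← Real.rpow_add hy0, sub_eq_add_neg]
  -- `W = √(y√D)` and `x = √(y/√D)` balance the two halves of the hyperbola.
  have h := norm_sum_neg_one_pow_div_cpow_mul_sum_divisors_le hzero hρ hD hD0 hχ
    (W := √y * q) (by positivity) hx
  rw [hWx, hlog] at h
  refine h.trans_eq ?_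
  rw [hpow, hqq]
  field_simp

theorem twenty_le_log {x : ℝ} (hx : 10 ^ 9 ≤ x) : 20 ≤ Real.log x := by
  calc (20 : ℝ) ≤ (29 : ℕ) * Real.log 2 := by push_cast; linarith [Real.log_two_gt_d9]
    _ = Real.log (2 ^ 29) := (Real.log_pow 2 29).symm
    _ ≤ Real.log x := Real.log_le_log (by norm_num) (by linarith)

theorem mul_sqrt_le_pow_six {r d : ℝ} (hr : 100 ≤ r) (hd : 3 ≤ d) :
    10 ^ 9 * √d ≤ (r * d ^ ((1 : ℝ) / 4) * Real.log d) ^ 6 := by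
  have hd0 : 0 < d := by linarith
  have hlog : 1 ≤ Real.log d :=
    (Real.le_log_iff_exp_le hd0).mpr (Real.exp_one_lt_three.le.trans hd)
  have hpow : (d ^ ((1 : ℝ) / 4)) ^ 6 = d * √d := by
    rw [← Real.rpow_natCast, ← Real.rpow_mul hd0.le, Real.sqrt_eq_rpow, ← Real.rpow_one_add' hd0.le]
      <;> norm_num
  calc 10 ^ 9 * √d ≤ 100 ^ 6 * (d * √d) := by
        rw [← mul_assoc]
        gcongr
        linarith
    _ = (100 * d ^ ((1 : ℝ) / 4) * 1) ^ 6 := by rw [mul_pow, mul_pow, one_pow, hpow, mul_one]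
    _ ≤ (r * d ^ ((1 : ℝ) / 4) * Real.log d) ^ 6 := by gcongr

end TwistedDivisorSum

theorem stmt11_general {ρ : ℂ} (hzero : riemannZeta ρ = 0) (hβ : 7 / 8 ≤ ρ.re) {D : ℕ}
    (hD_even : Even D) (hD : 10 ^ 9 ≤ D) {χ : DirichletCharacter ℂ D} (hχ : χ.IsPrimitive) {y : ℝ}
    (hy : 10 ^ 9 * √D ≤ y) :
    ‖∑ r ∈ Finset.Icc 1 ⌊y⌋₊, ((-1) ^ r / (r : ℂ) ^ ρ) * ∑ d ∈ r.divisors, χ d‖ <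
      2 / 3 * y ^ (1 / 2 - ρ.re) * ‖ρ‖ * (D : ℝ) ^ ((1 : ℝ) / 4) * Real.log D *
        Real.log (y / √D) := by
  have hD_real : (10 : ℝ) ^ 9 ≤ D := by exact_mod_cast hD
  have hsqrt : 0 < √(D : ℝ) := Real.sqrt_pos.mpr (by linarith)
  have hy0 : 0 < y := by nlinarith
  have hρ0 : 0 < ‖ρ‖ := (show 0 < ρ.re by linarith).trans_le (re_le_norm ρ)
  have hl : 20 ≤ Real.log D := twenty_le_log hD_real
  have hL : 20 ≤ Real.log (y / √D) := twenty_le_log ((le_div_iff₀ hsqrt).mpr hy)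
  have hβ_inv : 1 / ρ.re ≤ 8 / 7 := by
    rw [div_le_div_iff₀ (by linarith) (by norm_num)]
    linarith
  have numeric : 1 / ρ.re * (1 + (1 + Real.log D) * (1 + Real.log (y / √D) / 2)) <
      2 / 3 * Real.log D * Real.log (y / √D) := by
    calc _ ≤ 8 / 7 * (1 + (1 + Real.log D) * (1 + Real.log (y / √D) / 2)) := by gcongr
      _ < 2 / 3 * Real.log D * Real.log (y / √D) := by
        nlinarith [mul_nonneg (sub_nonneg.mpr hl) (sub_nonneg.mpr hL)]
  have hpos : 0 < y ^ (1 / 2 - ρ.re) * ‖ρ‖ * (D : ℝ) ^ ((1 : ℝ) / 4) := by positivity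
  have bound := norm_sum_neg_one_pow_div_cpow_mul_sum_divisors_le_of_sqrt_le hzero (by linarith)
    hD_even (by lia) hχ (show √D ≤ y by linarith)
  refine bound.trans_lt ((mul_lt_mul_of_pos_left numeric hpos).trans_eq ?_)
  ring

/-- Lemma 2: for a zero `ρ = β + iγ` of `ζ` with `β > 7/8`, `|ρ| > 10^{12}`, `γ log 2`
away from multiples of `2π`, a real primitive `χ` mod `D ≡ 0 (mod 4)`, `D > 10^9`, and
`U = |ρ| D^{1/4} log D`: for `U^6 ≤ y ≤ U^{12}`,
`|Σ_{r ≤ y} (-1)^r (1*χ)(r) / r^ρ| < (2/3) y^{1/2-β} |ρ| D^{1/4} log D log(y/√D)`. -/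
theorem stmt11 (β γ : ℝ) (ρ : ℂ) (hρ : ρ = β + γ * I)
    (hzero : riemannZeta ρ = 0) (hβ : 7 / 8 < β) (hρbig : 10 ^ 12 < ‖ρ‖)
    (δ : ℝ) (hδ1 : -Real.pi < δ) (hδ2 : δ ≤ Real.pi)
    (hδ3 : ∃ n : ℤ, γ * Real.log 2 = 2 * Real.pi * n + δ)
    (hδ4 : Real.pi / 100 < |δ|)
    (D : ℕ) (χ : DirichletCharacter ℂ D)
    (hreal : ∀ n : ℕ, (χ n).im = 0) (hprim : χ.IsPrimitive)
    (hD4 : D % 4 = 0) (hD : 10 ^ 9 < D)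
    (U : ℝ) (hU : U = ‖ρ‖ * (D : ℝ) ^ ((1 : ℝ) / 4) * Real.log D)
    (y : ℝ) (hy1 : U ^ (6 : ℕ) ≤ y) (hy2 : y ≤ U ^ (12 : ℕ)) :
    ‖∑ r ∈ Finset.Icc 1 ⌊y⌋₊,
        ((-1 : ℂ) ^ r / (r : ℂ) ^ ρ) * ∑ d ∈ r.divisors, χ d‖ <
      2 / 3 * y ^ (1 / 2 - β) * ‖ρ‖ * (D : ℝ) ^ ((1 : ℝ) / 4) * Real.log D *
        Real.log (y / Real.sqrt D) := by
  have hre : ρ.re = β := by simp [hρ]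
  rw [← hre] at hβ ⊢
  have hD_real : (10 : ℝ) ^ 9 < D := by exact_mod_cast hD
  refine stmt11_general hzero hβ.le (Nat.even_iff.mpr (by lia)) hD.le hprim (le_trans ?_ hy1)
  rw [hU]
  exact mul_sqrt_le_pow_six (by linarith) (by linarith)
end

section
/- Let ρ = β + iγ be a complex number with 0 < β < 1 such that (2^{1−ρ} − 1)ζ(ρ) = 0. Then for every real N ≥ 1, | Σ_{l ≤ N} (−1)^l/l^ρ | ≤ (1 + |ρ|/β) · N^{−β}. -/
open Complex

/-! Write `S(t) = ∑_{k ≤ t} c k` for a sequence with `|S| ≤ C`. Abel summation gives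
`∑_{l ≤ N} c l / l ^ s = S(N) N ^ (-s) + s ∫_0^N S(t) t ^ (-s - 1) dt`, so for `0 < Re s` the
partial sum differs from `s ∫_0^∞ S(t) t ^ (-s - 1) dt` by at most
`C (1 + |s| / Re s) N ^ (-Re s)`. This integral is a Mellin transform of `S`, hence holomorphic
in `s`, so it is the continuation of the Dirichlet series of `c` to the half-plane `0 < Re s`.
For `c k = (-1) ^ k` we have `C = 1`, and the continuation is `(2 ^ (1 - s) - 1) ζ(s)`. It is
reached through `expZeta (1 / 2)`, which is entire, so that one identity theorem can be applied on
the whole half-plane and the other on the complement of `1`.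
-/

section Summatory

open Asymptotics Filter MeasureTheory Set Topology

/-- The summatory function `t ↦ ∑_{1 ≤ k ≤ t} c k` of a sequence `c`; the value `c 0` is ignored,
as it is in `LSeries`. -/
noncomputable def summatory (c : ℕ → ℂ) (t : ℝ) : ℂ := ∑ k ∈ Finset.Icc 1 ⌊t⌋₊, c k

variable {c : ℕ → ℂ} {C N : ℝ} {s : ℂ}

lemma summatory_of_lt_one {t : ℝ} (ht : t < 1) : summatory c t = 0 := by
  simp [summatory, Nat.floor_eq_zero.2 ht]

lemma locallyIntegrableOn_summatory (c : ℕ → ℂ) :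
    LocallyIntegrableOn (summatory c) (Ioi 0) := by
  have h : LocallyIntegrableOn (fun _ ↦ 1 : ℝ → ℂ) (Ici 0) := locallyIntegrableOn_const 1
  simpa only [one_mul] using!
    (locallyIntegrableOn_mul_sum_Icc c (m := 1) le_rfl h).mono_set Ioi_subset_Ici_self

-- The exponent `-0` matches the form of the decay hypothesis in the Mellin transform lemmas.
lemma summatory_isBigO_atTop (hc : ∀ t, ‖summatory c t‖ ≤ C) :
    summatory c =O[atTop] (fun t : ℝ ↦ t ^ (-0 : ℝ)) :=
  .of_bound C (.of_forall fun t ↦ by simpa using hc t)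

lemma summatory_isBigO_nhdsGT_zero (c : ℕ → ℂ) (b : ℝ) :
    summatory c =O[𝓝[>] 0] (fun t : ℝ ↦ t ^ b) := by
  have h : summatory c =ᶠ[𝓝[>] 0] 0 := by
    filter_upwards [nhdsWithin_le_nhds (Iio_mem_nhds one_pos)] with t ht
    exact summatory_of_lt_one ht
  exact h.trans_isBigO (isBigO_zero _ _)

lemma mellinConvergent_summatory (hc : ∀ t, ‖summatory c t‖ ≤ C) (hs : s.re < 0) :
    MellinConvergent (summatory c) s :=
  mellinConvergent_of_isBigO_rpow (locallyIntegrableOn_summatory c) (summatory_isBigO_atTop hc) hs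
    (summatory_isBigO_nhdsGT_zero c _) (sub_one_lt s.re)

lemma differentiableAt_mellin_summatory (hc : ∀ t, ‖summatory c t‖ ≤ C)
    (hs : s.re < 0) : DifferentiableAt ℂ (mellin (summatory c)) s :=
  mellin_differentiableAt_of_isBigO_rpow (locallyIntegrableOn_summatory c)
    (summatory_isBigO_atTop hc) hs (summatory_isBigO_nhdsGT_zero c _) (sub_one_lt s.re)

lemma setIntegral_inter_Ioi_one_mul_summatory (g : ℝ → ℂ) (c : ℕ → ℂ) {u : Set ℝ}
    (hu : MeasurableSet u) :
    ∫ t in u ∩ Ioi 1, g t * summatory c t = ∫ t in u, g t * summatory c t := by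
  refine (setIntegral_eq_of_subset_of_ae_sdiff_eq_zero hu.nullMeasurableSet inter_subset_left
    ?_).symm
  filter_upwards [Measure.ae_ne volume 1] with t ht htu
  have ht' : t < 1 := lt_of_le_of_ne (not_lt.1 fun h ↦ htu.2 ⟨htu.1, h⟩) ht
  rw [summatory_of_lt_one ht', mul_zero]

lemma LSeries_eq_mul_mellin_summatory (hc : ∀ t, ‖summatory c t‖ ≤ C)
    (hs : 0 < s.re) (hsum : LSeriesSummable c s) :
    LSeries c s = s * mellin (summatory c) (-s) := by
  have hO : (fun n ↦ ∑ k ∈ Finset.Icc 1 n, c k) =O[atTop] fun n ↦ (n : ℝ) ^ (0 : ℝ) :=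
    .of_bound C (.of_forall fun n ↦ by simpa [summatory] using hc n)
  have hIoi : Ioi (0 : ℝ) ∩ Ioi 1 = Ioi 1 := inter_eq_right.2 (Ioi_subset_Ioi zero_le_one)
  simp only [mellin, smul_eq_mul]
  rw [LSeries_eq_mul_integral c le_rfl hs hsum hO,
    ← setIntegral_inter_Ioi_one_mul_summatory _ _ measurableSet_Ioi, hIoi]
  simp only [summatory, mul_comm, neg_add']

lemma sum_Icc_zero_ite {M : Type*} [AddCommMonoid M] (c : ℕ → M) (n : ℕ) :
    ∑ k ∈ Finset.Icc 0 n, (if k = 0 then 0 else c k) = ∑ k ∈ Finset.Icc 1 n, c k := by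
  rw [Finset.Icc_eq_cons_Ioc n.zero_le, Finset.sum_cons, if_pos rfl, zero_add]
  exact Finset.sum_congr rfl fun k hk ↦ if_neg (Finset.mem_Ioc.1 hk).1.ne'

lemma sum_div_cpow_eq (c : ℕ → ℂ) (hs : s ≠ 0) (N : ℝ) :
    ∑ l ∈ Finset.Icc 1 ⌊N⌋₊, c l / (l : ℂ) ^ s =
      (N : ℂ) ^ (-s) * summatory c N +
        s * ∫ t in Ioc 0 N, (t : ℂ) ^ (-s - 1) * summatory c t := by
  have hderiv (t : ℝ) (ht : t ∈ Icc 1 N) :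
      HasDerivAt (fun x : ℝ ↦ (x : ℂ) ^ (-s)) (-s * (t : ℂ) ^ (-s - 1)) t :=
    hasDerivAt_ofReal_cpow_const (zero_lt_one.trans_le ht.1).ne' (neg_ne_zero.2 hs)
  have hcont : ContinuousOn (fun t : ℝ ↦ -s * (t : ℂ) ^ (-s - 1)) (Icc 1 N) := fun t ht ↦
    ((continuousAt_ofReal_cpow_const _ _
      (.inr (zero_lt_one.trans_le ht.1).ne')).const_mul _).continuousWithinAt
  have habel := sum_mul_eq_sub_integral_mul₀ (f := fun x : ℝ ↦ (x : ℂ) ^ (-s))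
    (fun k ↦ if k = 0 then 0 else c k) (if_pos rfl) N
    (fun t ht ↦ (hderiv t ht).differentiableAt)
    (hcont.integrableOn_Icc.congr_fun (fun t ht ↦ (hderiv t ht).deriv.symm) measurableSet_Icc)
  have hint : ∫ t in Ioc 1 N, deriv (fun x : ℝ ↦ (x : ℂ) ^ (-s)) t * summatory c t =
      -s * ∫ t in Ioc 0 N, (t : ℂ) ^ (-s - 1) * summatory c t := by
    have hIoc : Ioc 0 N ∩ Ioi 1 = Ioc 1 N := by rw [Ioc_inter_Ioi, max_eq_right zero_le_one]
    rw [← setIntegral_inter_Ioi_one_mul_summatory _ _ (u := Ioc 0 N) measurableSet_Ioc, hIoc,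
      ← integral_const_mul]
    refine setIntegral_congr_fun measurableSet_Ioc fun t ht ↦ ?_
    rw [(hderiv t (Ioc_subset_Icc_self ht)).deriv, mul_assoc]
  simp only [mul_ite, mul_zero, sum_Icc_zero_ite] at habel
  calc ∑ l ∈ Finset.Icc 1 ⌊N⌋₊, c l / (l : ℂ) ^ s
    _ = ∑ l ∈ Finset.Icc 1 ⌊N⌋₊, ((l : ℝ) : ℂ) ^ (-s) * c l := by
      simp only [ofReal_natCast, cpow_neg, div_eq_inv_mul]
    _ = (N : ℂ) ^ (-s) * summatory c N -
        ∫ t in Ioc 1 N, deriv (fun x : ℝ ↦ (x : ℂ) ^ (-s)) t * summatory c t := habel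
    _ = (N : ℂ) ^ (-s) * summatory c N +
        s * ∫ t in Ioc 0 N, (t : ℂ) ^ (-s - 1) * summatory c t := by
      rw [hint, neg_mul, sub_neg_eq_add]

lemma norm_setIntegral_Ioi_cpow_mul_summatory_le (hc : ∀ t, ‖summatory c t‖ ≤ C)
    (hs : 0 < s.re) (hN : 0 < N) :
    ‖∫ t in Ioi N, (t : ℂ) ^ (-s - 1) * summatory c t‖ ≤ C / s.re * N ^ (-s.re) := by
  have hlt : -s.re - 1 < -1 := by linarith
  calc ‖∫ t in Ioi N, (t : ℂ) ^ (-s - 1) * summatory c t‖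
    _ ≤ ∫ t in Ioi N, t ^ (-s.re - 1) * C := by
      refine norm_integral_le_of_norm_le ((integrableOn_Ioi_rpow_of_lt hlt hN).mul_const C) ?_
      filter_upwards [ae_restrict_mem measurableSet_Ioi] with t ht
      rw [norm_mul, norm_cpow_eq_rpow_re_of_pos (hN.trans ht), sub_re, neg_re, one_re]
      gcongr
      · exact Real.rpow_nonneg (hN.trans ht).le _
      · exact hc t
    _ = C / s.re * N ^ (-s.re) := by
      rw [integral_mul_const, integral_Ioi_rpow_of_lt hlt hN, sub_add_cancel]
      field

theorem norm_sum_div_cpow_sub_mul_mellin_summatory_le (hc : ∀ t, ‖summatory c t‖ ≤ C)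
    (hs : 0 < s.re) (hN : 0 < N) :
    ‖∑ l ∈ Finset.Icc 1 ⌊N⌋₊, c l / (l : ℂ) ^ s - s * mellin (summatory c) (-s)‖ ≤
      C * (1 + ‖s‖ / s.re) * N ^ (-s.re) := by
  have hint : IntegrableOn (fun t : ℝ ↦ (t : ℂ) ^ (-s - 1) * summatory c t) (Ioi 0) :=
    mellinConvergent_summatory hc (by simpa using hs)
  have hsplit : mellin (summatory c) (-s) =
      (∫ t in Ioc 0 N, (t : ℂ) ^ (-s - 1) * summatory c t) +
        ∫ t in Ioi N, (t : ℂ) ^ (-s - 1) * summatory c t := by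
    simp only [mellin, smul_eq_mul]
    rw [← Ioc_union_Ioi_eq_Ioi hN.le]
    exact setIntegral_union (Ioc_disjoint_Ioi le_rfl) measurableSet_Ioi
      (hint.mono_set Ioc_subset_Ioi_self) (hint.mono_set (Ioi_subset_Ioi hN.le))
  have hboundary : ‖(N : ℂ) ^ (-s) * summatory c N‖ ≤ N ^ (-s.re) * C := by
    rw [norm_mul, norm_cpow_eq_rpow_re_of_pos hN, neg_re]
    gcongr
    exact hc N
  calc ‖∑ l ∈ Finset.Icc 1 ⌊N⌋₊, c l / (l : ℂ) ^ s - s * mellin (summatory c) (-s)‖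
    _ = ‖(N : ℂ) ^ (-s) * summatory c N -
          s * ∫ t in Ioi N, (t : ℂ) ^ (-s - 1) * summatory c t‖ := by
      rw [sum_div_cpow_eq c (ne_zero_of_re_pos hs), hsplit]
      ring_nf
    _ ≤ N ^ (-s.re) * C + ‖s‖ * (C / s.re * N ^ (-s.re)) := by
      refine norm_sub_le_of_le hboundary ?_
      rw [norm_mul]
      gcongr
      exact norm_setIntegral_Ioi_cpow_mul_summatory_le hc hs hN
    _ = C * (1 + ‖s‖ / s.re) * N ^ (-s.re) := by ring

lemma mul_mellin_summatory_eq_of_LSeriesHasSum {F : ℂ → ℂ} (hc : ∀ t, ‖summatory c t‖ ≤ C)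
    (hF : DifferentiableOn ℂ F {z | 0 < z.re})
    (hLF : ∀ z : ℂ, 1 < z.re → LSeriesHasSum c z (F z)) (hs : 0 < s.re) :
    s * mellin (summatory c) (-s) = F s := by
  have hopen : IsOpen {z : ℂ | 0 < z.re} := isOpen_lt continuous_const continuous_re
  have hdiff : DifferentiableOn ℂ (fun z ↦ z * mellin (summatory c) (-z)) {z | 0 < z.re} := by
    intro z hz
    have hmellin : DifferentiableAt ℂ (mellin (summatory c)) (-z) :=
      differentiableAt_mellin_summatory hc (by simpa using hz)
    exact (differentiableAt_id.mul
      (hmellin.comp z differentiableAt_id.neg)).differentiableWithinAt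
  refine (hdiff.analyticOnNhd hopen).eqOn_of_preconnected_of_eventuallyEq (hF.analyticOnNhd hopen)
    (convex_halfSpace_re_gt 0).isPreconnected (z₀ := 2) (by simp) ?_ hs
  filter_upwards [(continuous_re.tendsto 2).eventually_const_lt (u := 1) (by simp)] with z hz
  rw [← LSeries_eq_mul_mellin_summatory hc (zero_lt_one.trans hz) (hLF z hz).LSeriesSummable,
    (hLF z hz).LSeries_eq]

theorem norm_sum_div_cpow_sub_le_of_LSeriesHasSum {F : ℂ → ℂ} (hc : ∀ t, ‖summatory c t‖ ≤ C)
    (hF : DifferentiableOn ℂ F {z | 0 < z.re})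
    (hLF : ∀ z : ℂ, 1 < z.re → LSeriesHasSum c z (F z)) (hs : 0 < s.re) (hN : 0 < N) :
    ‖∑ l ∈ Finset.Icc 1 ⌊N⌋₊, c l / (l : ℂ) ^ s - F s‖ ≤ C * (1 + ‖s‖ / s.re) * N ^ (-s.re) := by
  rw [← mul_mellin_summatory_eq_of_LSeriesHasSum hc hF hLF hs]
  exact norm_sum_div_cpow_sub_mul_mellin_summatory_le hc hs hN

end Summatory

section AlternatingZeta

open HurwitzZeta

lemma norm_summatory_neg_one_pow_le (t : ℝ) : ‖summatory (fun k ↦ (-1) ^ k) t‖ ≤ 1 := by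
  rw [summatory, ← Finset.Ico_add_one_right_eq_Icc, Finset.sum_Ico_eq_sum_range]
  simp only [pow_add, pow_one, ← Finset.mul_sum, neg_one_geom_sum]
  split_ifs <;> simp

lemma unitAddCircle_coe_half_ne_zero : ((1 / 2 : ℝ) : UnitAddCircle) ≠ 0 := by
  rw [Ne, AddCircle.coe_eq_zero_iff_of_mem_Ico] <;> norm_num

lemma LSeriesHasSum_neg_one_pow {s : ℂ} (hs : 1 < s.re) :
    LSeriesHasSum (fun n ↦ (-1) ^ n) s (expZeta ((1 / 2 : ℝ) : UnitAddCircle) s) := by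
  convert LSeriesHasSum_exp (1 / 2) hs using 2 with n
  rw [← exp_pi_mul_I, ← exp_nat_mul]
  push_cast
  ring_nf

lemma expZeta_half_of_one_lt_re {s : ℂ} (hs : 1 < s.re) :
    expZeta ((1 / 2 : ℝ) : UnitAddCircle) s = (2 ^ (1 - s) - 1) * riemannZeta s := by
  have hs₀ : s ≠ 0 := ne_zero_of_one_lt_re hs
  -- Adding `ζ(s)` doubles the even terms and cancels the odd ones.
  have heven (k : ℕ) : LSeries.term 1 s (2 * k) + LSeries.term (fun n ↦ (-1) ^ n) s (2 * k) =
      2 ^ (1 - s) * LSeries.term 1 s k := by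
    have hmul : ((2 * k : ℕ) : ℂ) ^ s = 2 ^ s * (k : ℂ) ^ s := by
      exact_mod_cast natCast_mul_natCast_cpow 2 k s
    simp only [LSeries.term_of_ne_zero' hs₀, hmul, Pi.one_apply, even_two_mul, Even.neg_one_pow,
      cpow_sub _ _ two_ne_zero, cpow_one]
    ring
  have hodd (k : ℕ) :
      LSeries.term 1 s (2 * k + 1) + LSeries.term (fun n ↦ (-1) ^ n) s (2 * k + 1) = 0 := by
    simp [LSeries.term_of_ne_zero, pow_succ, pow_mul, neg_div]
  have hzeta : HasSum (LSeries.term 1 s) (riemannZeta s) := LSeriesHasSum_one hs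
  have hsum : HasSum
      (fun n ↦ LSeries.term 1 s n + LSeries.term (fun n ↦ (-1) ^ n) s n)
      (2 ^ (1 - s) * riemannZeta s + 0) :=
    HasSum.even_add_odd (by simpa only [heven] using hzeta.mul_left (2 ^ (1 - s)))
      (by simpa only [hodd] using hasSum_zero)
  linear_combination (hzeta.add (LSeriesHasSum_neg_one_pow hs)).unique hsum

lemma expZeta_half {s : ℂ} (hs : s ≠ 1) :
    expZeta ((1 / 2 : ℝ) : UnitAddCircle) s = (2 ^ (1 - s) - 1) * riemannZeta s := by
  have hexp : DifferentiableOn ℂ (expZeta ((1 / 2 : ℝ) : UnitAddCircle)) {1}ᶜ :=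
    (differentiable_expZeta_of_ne_zero unitAddCircle_coe_half_ne_zero).differentiableOn
  have hzeta : DifferentiableOn ℂ (fun z ↦ (2 ^ (1 - z) - 1) * riemannZeta z) {1}ᶜ := fun z hz ↦
    ((((differentiableAt_id.const_sub 1).const_cpow (.inl two_ne_zero)).sub_const 1).mul
      (differentiableAt_riemannZeta hz)).differentiableWithinAt
  refine (hexp.analyticOnNhd isOpen_compl_singleton).eqOn_of_preconnected_of_eventuallyEq
    (hzeta.analyticOnNhd isOpen_compl_singleton)
    (isConnected_compl_singleton_of_one_lt_rank (by simp) 1).isPreconnected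
    (z₀ := 2) (by simp) ?_ hs
  filter_upwards [(continuous_re.tendsto 2).eventually_const_lt (u := 1) (by simp)] with z hz
  exact expZeta_half_of_one_lt_re hz

end AlternatingZeta

theorem stmt13_general {s : ℂ} (hs : 0 < s.re) (hs₁ : s ≠ 1) {N : ℝ} (hN : 0 < N) :
    ‖∑ l ∈ Finset.Icc 1 ⌊N⌋₊, (-1 : ℂ) ^ l / (l : ℂ) ^ s - (2 ^ (1 - s) - 1) * riemannZeta s‖ ≤
      (1 + ‖s‖ / s.re) * N ^ (-s.re) := by
  rw [← expZeta_half hs₁, ← one_mul (1 + ‖s‖ / s.re)]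
  exact norm_sum_div_cpow_sub_le_of_LSeriesHasSum norm_summatory_neg_one_pow_le
    (HurwitzZeta.differentiable_expZeta_of_ne_zero unitAddCircle_coe_half_ne_zero).differentiableOn
    (fun _ ↦ LSeriesHasSum_neg_one_pow) hs hN

/-- If `ρ = β + iγ` with `0 < β < 1` and `(2^{1-ρ} - 1) ζ(ρ) = 0`, then for all `N ≥ 1`,
`|Σ_{l ≤ N} (-1)^l / l^ρ| ≤ (1 + |ρ|/β) N^{-β}`. -/
theorem stmt13 (β γ : ℝ) (ρ : ℂ) (hρ : ρ = β + γ * I)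
    (hβ0 : 0 < β) (hβ1 : β < 1)
    (hzero : ((2 : ℂ) ^ (1 - ρ) - 1) * riemannZeta ρ = 0)
    (N : ℝ) (hN : 1 ≤ N) :
    ‖∑ l ∈ Finset.Icc 1 ⌊N⌋₊, (-1 : ℂ) ^ l / (l : ℂ) ^ ρ‖ ≤
      (1 + ‖ρ‖ / β) * N ^ (-β) := by
  obtain rfl : β = ρ.re := by simp [hρ]
  have hρ₁ : ρ ≠ 1 := by rintro rfl; simp at hβ1
  simpa only [hzero, sub_zero] using stmt13_general hβ0 hρ₁ (zero_lt_one.trans_le hN)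
end
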